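/- Let Ω ⊂ ℂⁿ be a bounded convex domain whose boundary is C^{1,ε}-smooth for some ε > 0, and let o ∈ Ω. Suppose (z_k) and (w_m) are sequences in Ω with z_k → x ∈ ∂Ω and w_m → y ∈ ∂Ω. If limsup_{k,m → ∞} (z_k | w_m)_o = ∞ for the Gromov product with respect to the Kobayashi distance, then the complex affine tangent hyperplanes coincide: T_x^ℂ ∂Ω = T_y^ℂ ∂Ω. -/

import Mathlib

open Metric Set MeasureTheory Filter Topology

noncomputable section

variable {E : Type*} [NormedAddCommGroup E] [NormedSpace ℂ E]

/-- Distance from `x` to the boundary of `D`. -/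
def bdist (D : Set E) (x : E) : ℝ := Metric.infDist x (frontier D)

/-- Distance from `x` to the boundary of `D` along the complex line `x + ℂ v`. -/
def bdistDir (D : Set E) (x v : E) : ℝ :=
  Metric.infDist x (frontier D ∩ {w | ∃ c : ℂ, w = x + c • v})

/-- The infinitesimal Kobayashi (pseudo-)metric of `D ⊆ E`. -/
def kobMetric (D : Set E) (x v : E) : ℝ :=
  sInf { r : ℝ | ∃ (f : ℂ → E) (ξ : ℂ),
    DifferentiableOn ℂ f (ball (0:ℂ) 1) ∧ MapsTo f (ball (0:ℂ) 1) D ∧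
    f 0 = x ∧ ξ • derivWithin f (ball (0:ℂ) 1) 0 = v ∧ r = ‖ξ‖ }

/-- `σ` is absolutely continuous on `[a,b]`, with a.e. derivative `g`. -/
def IsACWithDeriv (σ g : ℝ → E) (a b : ℝ) : Prop :=
  IntervalIntegrable g volume a b ∧
  ∀ t ∈ Icc a b, σ t = σ a + ∫ s in a..t, g s

/-- The Kobayashi pseudo-distance of `D`, defined via lengths of absolutely
continuous curves (Venturini's description). -/
def kobDist (D : Set E) (x y : E) : ℝ :=
  sInf { r : ℝ | ∃ (a b : ℝ) (σ g : ℝ → E), a ≤ b ∧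
    IsACWithDeriv σ g a b ∧ MapsTo σ (Icc a b) D ∧ σ a = x ∧ σ b = y ∧
    r = ∫ t in a..b, kobMetric D (σ t) (g t) }

/-- Log-type convex domain, with explicit constants `C, ν > 0`. -/
def LogTypeConvexWith (D : Set E) (C ν : ℝ) : Prop :=
  IsOpen D ∧ D.Nonempty ∧ Bornology.IsBounded D ∧ Convex ℝ D ∧ 0 < C ∧ 0 < ν ∧
  ∀ z ∈ D, ∀ v : E, v ≠ 0 →
    bdistDir D z v ≤ C / |Real.log (bdist D z)| ^ (1 + ν)

/-- Log-type convex domain. -/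
def LogTypeConvex (D : Set E) : Prop := ∃ C ν : ℝ, LogTypeConvexWith D C ν

/-- A `ℂ`-convex set: every nonempty intersection with a complex affine line is
connected and simply connected. -/
def CConvex (D : Set E) : Prop :=
  ∀ z v : E, v ≠ 0 → (D ∩ {w | ∃ c : ℂ, w = z + c • v}).Nonempty →
    IsConnected (D ∩ {w | ∃ c : ℂ, w = z + c • v}) ∧
    SimplyConnectedSpace ↥(D ∩ {w | ∃ c : ℂ, w = z + c • v})

/-- Log-type `ℂ`-convex domain. -/
def LogTypeCConvex (D : Set E) : Prop :=
  IsOpen D ∧ D.Nonempty ∧ Bornology.IsBounded D ∧ CConvex D ∧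
  ∃ C ν : ℝ, 0 < C ∧ 0 < ν ∧
    ∀ z ∈ D, ∀ v : E, v ≠ 0 →
      bdistDir D z v ≤ C / |Real.log (bdist D z)| ^ (1 + ν)

/-- `σ : [a,b] → D` (with a.e. derivative `g`) is a `(λ,κ)`-almost geodesic for the
Kobayashi distance of `D`. -/
def AlmostGeodesicOn (D : Set E) (lam kap : ℝ) (σ g : ℝ → E) (a b : ℝ) : Prop :=
  MapsTo σ (Icc a b) D ∧ IsACWithDeriv σ g a b ∧
  (∀ s ∈ Icc a b, ∀ t ∈ Icc a b,
    (1 / lam) * |t - s| - kap ≤ kobDist D (σ s) (σ t) ∧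
    kobDist D (σ s) (σ t) ≤ lam * |t - s| + kap) ∧
  (∀ᵐ t ∂volume, t ∈ Icc a b → kobMetric D (σ t) (g t) ≤ lam)

/-- `σ : [a,b] → D` is a `C`-rough geodesic for the Kobayashi distance of `D`. -/
def RoughGeodesicOn (D : Set E) (C : ℝ) (σ : ℝ → E) (a b : ℝ) : Prop :=
  MapsTo σ (Icc a b) D ∧
  ∀ s ∈ Icc a b, ∀ t ∈ Icc a b,
    |t - s| - C ≤ kobDist D (σ s) (σ t) ∧ kobDist D (σ s) (σ t) ≤ |t - s| + C

/-- `ρ` is a `C¹` local defining function for `D` near `ξ` on the open set `W`. -/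
def IsLocalDefiningFn (D : Set E) (ξ : E) (W : Set E) (ρ : E → ℝ) : Prop :=
  IsOpen W ∧ ξ ∈ W ∧ ContDiffOn ℝ 1 ρ W ∧ (∀ x ∈ W, fderiv ℝ ρ x ≠ 0) ∧
  D ∩ W = {x ∈ W | ρ x < 0} ∧ frontier D ∩ W = {x ∈ W | ρ x = 0}

/-- `ξ` is a Dini-smooth boundary point of `D`: the boundary is `C¹` near `ξ` and the
unit normal admits a modulus of continuity `ω` satisfying the Dini condition. -/
def DiniSmoothBoundaryPoint (D : Set E) (ξ : E) : Prop :=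
  ∃ (W : Set E) (ρ : E → ℝ) (ω : ℝ → ℝ),
    IsLocalDefiningFn D ξ W ρ ∧
    (∀ t ∈ Icc (0:ℝ) 1, 0 ≤ ω t) ∧ MonotoneOn ω (Icc (0:ℝ) 1) ∧
    IntegrableOn (fun t => ω t / t) (Ioc (0:ℝ) 1) ∧
    ∀ x ∈ frontier D ∩ W, ∀ y ∈ frontier D ∩ W, ‖x - y‖ ≤ 1 →
      ‖(‖fderiv ℝ ρ x‖)⁻¹ • fderiv ℝ ρ x - (‖fderiv ℝ ρ y‖)⁻¹ • fderiv ℝ ρ y‖ ≤ ω ‖x - y‖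

/-- `D` has `C^{1,ε}` boundary: near every boundary point there is a `C¹` defining
function whose differential is `ε`-Hölder. -/
def HolderC1Boundary (D : Set E) (ε : ℝ) : Prop :=
  ∀ ξ ∈ frontier D, ∃ (W : Set E) (ρ : E → ℝ) (M : ℝ), 0 < M ∧
    IsLocalDefiningFn D ξ W ρ ∧
    ∀ x ∈ W, ∀ y ∈ W, ‖fderiv ℝ ρ x - fderiv ℝ ρ y‖ ≤ M * ‖x - y‖ ^ ε

/-- The complex affine tangent hyperplane of `∂D` at `x`, computed from a local
defining function `ρ`. -/
def complexTangentHyperplane (ρ : E → ℝ) (x : E) : Set E :=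
  {w : E | fderiv ℝ ρ x (w - x) = 0 ∧ fderiv ℝ ρ x ((Complex.I : ℂ) • (w - x)) = 0}

/-- The Gromov product of `x` and `y` with respect to the base point `o`, for the
Kobayashi distance of `D`. -/
def gromovProd (D : Set E) (o x y : E) : ℝ :=
  (kobDist D x o + kobDist D o y - kobDist D x y) / 2

end



section
variable {E : Type*} [NormedAddCommGroup E] [NormedSpace ℂ E]

lemma kobMetric_nonneg (D : Set E) (x v : E) : 0 ≤ kobMetric D x v := by
  apply Real.sInf_nonneg
  rintro r ⟨f, ξ, -, -, -, -, rfl⟩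
  exact norm_nonneg _

lemma kobMetric_le {D : Set E} {x v : E} {f : ℂ → E} {f' : E} {ξ : ℂ}
    (hd : DifferentiableOn ℂ f (ball (0:ℂ) 1)) (hm : MapsTo f (ball (0:ℂ) 1) D)
    (h0 : f 0 = x) (hf : HasDerivAt f f' 0) (hξ : ξ • f' = v) :
    kobMetric D x v ≤ ‖ξ‖ := by
  apply csInf_le
  · refine ⟨0, ?_⟩
    rintro r ⟨f, ξ, -, -, -, -, rfl⟩
    exact norm_nonneg _
  · refine ⟨f, ξ, hd, hm, h0, ?_, rfl⟩
    rw [derivWithin_of_isOpen isOpen_ball (by simp), hf.deriv, hξ]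

lemma ball_disc {D : Set E} {x : E} (v : E) {r : ℝ} (hr : 0 < r) (hb : ball x r ⊆ D) :
    ∃ (f : ℂ → E) (f' : E), DifferentiableOn ℂ f (ball (0:ℂ) 1) ∧ MapsTo f (ball (0:ℂ) 1) D ∧
      f 0 = x ∧ HasDerivAt f f' 0 ∧ ((‖v‖ / r : ℝ) : ℂ) • f' = v := by
  have hd : ∀ z : ℂ, HasDerivAt (fun ζ : ℂ => x + ζ • (((r / ‖v‖ : ℝ) : ℂ) • v))
      (((r / ‖v‖ : ℝ) : ℂ) • v) z := by
    intro z
    simpa using ((hasDerivAt_id z).smul_const (((r / ‖v‖ : ℝ) : ℂ) • v)).const_add x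
  refine ⟨_, _, fun z _ => (hd z).differentiableAt.differentiableWithinAt, ?_, by simp, hd 0, ?_⟩
  · intro ζ hζ
    apply hb
    simp only [mem_ball, dist_self_add_left, norm_smul, Complex.norm_real] at hζ ⊢
    rw [dist_zero_right] at hζ
    rcases eq_or_ne v 0 with rfl | hv
    · simpa using hr
    · have hv' : 0 < ‖v‖ := norm_pos_iff.2 hv
      rw [Real.norm_of_nonneg (by positivity), div_mul_cancel₀ _ hv'.ne']
      nlinarith
  · rcases eq_or_ne v 0 with rfl | hv
    · simp
    · have hv' : 0 < ‖v‖ := norm_pos_iff.2 hv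
      rw [smul_smul, ← Complex.ofReal_mul]
      have : ‖v‖ / r * (r / ‖v‖) = 1 := by field_simp
      simp [this]

lemma kobMetric_le_ball {D : Set E} {x : E} (v : E) {r : ℝ} (hr : 0 < r) (hb : ball x r ⊆ D) :
    kobMetric D x v ≤ ‖v‖ / r := by
  obtain ⟨f, f', hd, hm, h0, hf, hξ⟩ := ball_disc v hr hb
  have := kobMetric_le hd hm h0 hf hξ
  rwa [Complex.norm_real, Real.norm_of_nonneg (by positivity)] at this

lemma kobSet_nonempty {D : Set E} (hD : IsOpen D) {x : E} (hx : x ∈ D) (v : E) :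
    { r : ℝ | ∃ (f : ℂ → E) (ξ : ℂ),
    DifferentiableOn ℂ f (ball (0:ℂ) 1) ∧ MapsTo f (ball (0:ℂ) 1) D ∧
    f 0 = x ∧ ξ • derivWithin f (ball (0:ℂ) 1) 0 = v ∧ r = ‖ξ‖ }.Nonempty := by
  obtain ⟨r, hr, hb⟩ := Metric.isOpen_iff.1 hD x hx
  obtain ⟨f, f', hd, hm, h0, hf, hξ⟩ := ball_disc v hr hb
  refine ⟨‖((‖v‖ / r : ℝ) : ℂ)‖, f, ((‖v‖ / r : ℝ) : ℂ), hd, hm, h0, ?_, rfl⟩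
  rw [derivWithin_of_isOpen isOpen_ball (by simp), hf.deriv, hξ]

lemma kobMetric_neg (D : Set E) (x v : E) : kobMetric D x (-v) = kobMetric D x v := by
  unfold kobMetric
  congr 1
  ext r
  constructor
  · rintro ⟨f, ξ, h1, h2, h3, h4, h5⟩
    exact ⟨f, -ξ, h1, h2, h3, by rw [neg_smul, h4, neg_neg], by simpa using h5⟩
  · rintro ⟨f, ξ, h1, h2, h3, h4, h5⟩
    exact ⟨f, -ξ, h1, h2, h3, by rw [neg_smul, h4], by simpa using h5⟩

lemma schwarz_half {φ : ℂ → ℂ} (hd : DifferentiableOn ℂ φ (ball (0:ℂ) 1))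
    (hpos : ∀ ζ ∈ ball (0:ℂ) 1, 0 < (φ ζ).re) : ‖deriv φ 0‖ ≤ 2 * ‖φ 0‖ := by
  have h0 : (0:ℂ) ∈ ball (0:ℂ) 1 := by simp
  have hp0 := hpos 0 h0
  set q := φ 0 with hq
  have hne : ∀ ζ ∈ ball (0:ℂ) 1, φ ζ + (starRingEnd ℂ) q ≠ 0 := by
    intro ζ hζ h
    have := congrArg Complex.re h
    simp at this
    linarith [hpos ζ hζ]
  let G : ℂ → ℂ := fun ζ => (φ ζ - q) / (φ ζ + (starRingEnd ℂ) q)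
  have hG : DifferentiableOn ℂ G (ball (0:ℂ) 1) :=
    (hd.sub_const q).div (hd.add_const _) hne
  have hG0 : G 0 = 0 := by simp [G, hq]
  have hmaps : MapsTo G (ball (0:ℂ) 1) (closedBall (G 0) 1) := by
    intro ζ hζ
    rw [hG0, mem_closedBall, dist_zero_right, norm_div,
      div_le_one (norm_pos_iff.2 (hne ζ hζ))]
    rw [← sq_le_sq₀ (norm_nonneg _) (norm_nonneg _), Complex.sq_norm, Complex.sq_norm,
      Complex.normSq_apply, Complex.normSq_apply]
    simp
    nlinarith [hpos ζ hζ, mul_pos (hpos ζ hζ) hp0]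
  have h1 := Complex.norm_deriv_le_one_of_mapsTo_ball hG hmaps one_pos
  have hφ : HasDerivAt φ (deriv φ 0) 0 :=
    (hd.differentiableAt (ball_mem_nhds _ one_pos)).hasDerivAt
  have hGd : HasDerivAt G _ 0 := (hφ.sub_const q).div (hφ.add_const _) (hne 0 h0)
  rw [hGd.deriv] at h1
  have hs := hne 0 h0
  rw [← hq] at h1 hs
  have e : (deriv φ 0 * (q + (starRingEnd ℂ) q) - (q - q) * deriv φ 0) / (q + (starRingEnd ℂ) q) ^ 2
      = deriv φ 0 / (q + (starRingEnd ℂ) q) := by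
    field_simp; ring
  rw [e, norm_div, div_le_one (norm_pos_iff.2 hs)] at h1
  refine h1.trans ((norm_add_le _ _).trans ?_)
  simp; linarith

lemma kobMetric_lower {D : Set E} (hD : IsOpen D) {x : E} (hx : x ∈ D) (v p : E) (l : E →L[ℂ] ℂ)
    (hl : ∀ u ∈ D, 0 < (l (u - p)).re) :
    ‖l v‖ ≤ (2 * kobMetric D x v) * ‖l (x - p)‖ := by
  have hpos : 0 < ‖l (x - p)‖ := norm_pos_iff.2 fun h => by
    have := hl x hx; simp [h] at this
  have : ‖l v‖ / (2 * ‖l (x - p)‖) ≤ kobMetric D x v := by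
    apply le_csInf (kobSet_nonempty hD hx v)
    rintro r ⟨f, ξ, hd, hm, h0, hv, rfl⟩
    rw [derivWithin_of_isOpen isOpen_ball (by simp)] at hv
    have hφ : DifferentiableOn ℂ (fun ζ => l (f ζ - p)) (ball (0:ℂ) 1) :=
      l.differentiable.comp_differentiableOn (hd.sub_const p)
    have h1 := schwarz_half hφ (fun ζ hζ => hl _ (hm hζ))
    have hf : HasDerivAt f (deriv f 0) 0 :=
      (hd.differentiableAt (ball_mem_nhds _ one_pos)).hasDerivAt
    have h2 : HasDerivAt (fun ζ => l (f ζ - p)) (l (deriv f 0)) 0 :=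
      l.hasFDerivAt.comp_hasDerivAt 0 (hf.sub_const p)
    rw [h2.deriv, h0] at h1
    rw [div_le_iff₀ (by positivity), ← hv, map_smul, norm_smul]
    exact mul_le_mul_of_nonneg_left h1 (norm_nonneg _)
  rw [div_le_iff₀ (by positivity)] at this
  linarith

lemma kobMetric_usc {D : Set E} (hD : IsOpen D) (hc : Convex ℝ D) (c : ℝ) :
    IsOpen {q : E × E | q.1 ∈ D ∧ kobMetric D q.1 q.2 < c} := by
  rw [Metric.isOpen_iff]
  rintro ⟨x, v⟩ ⟨hx, hk⟩
  simp only at hx hk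
  have hc0 : 0 < c := (kobMetric_nonneg D x v).trans_lt hk
  obtain ⟨f, ξ, hd, hm, h0, hξ0, hv, hlt⟩ : ∃ (f : ℂ → E) (ξ : ℂ),
      DifferentiableOn ℂ f (ball (0:ℂ) 1) ∧ MapsTo f (ball (0:ℂ) 1) D ∧
      f 0 = x ∧ ξ ≠ 0 ∧ ξ • deriv f 0 = v ∧ ‖ξ‖ < c := by
    rcases eq_or_ne v 0 with rfl | hv0
    · refine ⟨fun _ => x, ((c/2 : ℝ) : ℂ), differentiableOn_const x, fun _ _ => hx, rfl, ?_, by simp, ?_⟩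
      · exact_mod_cast (half_pos hc0).ne'
      · rw [Complex.norm_real, Real.norm_of_nonneg (by positivity)]; linarith
    · obtain ⟨_, ⟨f, ξ, h1, h2, h3, h4, rfl⟩, h⟩ := exists_lt_of_csInf_lt (kobSet_nonempty hD hx v) hk
      rw [derivWithin_of_isOpen isOpen_ball (by simp)] at h4
      exact ⟨f, ξ, h1, h2, h3, by rintro rfl; simp at h4; exact hv0 h4.symm, h4, h⟩
  have hξp : 0 < ‖ξ‖ := norm_pos_iff.2 hξ0
  obtain ⟨r, hr, hb⟩ := Metric.isOpen_iff.1 hD x hx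
  obtain ⟨δ, hδ0, hδ1, hδc⟩ : ∃ δ : ℝ, 0 < δ ∧ δ < 1 ∧ ‖ξ‖ / (1 - δ) < c := by
    refine ⟨(c - ‖ξ‖) / (2 * c), by apply div_pos <;> linarith, ?_, ?_⟩
    · rw [div_lt_one (by linarith)]; linarith
    · have : 1 - (c - ‖ξ‖) / (2 * c) = (c + ‖ξ‖) / (2 * c) := by field_simp; ring
      rw [this, div_div_eq_mul_div, div_lt_iff₀ (by linarith)]
      nlinarith
  have hδ1' : 0 < 1 - δ := by linarith
  refine ⟨min (δ * r / 2) (‖ξ‖ * δ * r / 2), by positivity, ?_⟩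
  rintro ⟨x', v'⟩ hq
  rw [mem_ball, Prod.dist_eq, max_lt_iff, lt_min_iff, lt_min_iff] at hq
  simp only [dist_eq_norm] at hq
  obtain ⟨⟨hx1, -⟩, ⟨-, hv1⟩⟩ := hq
  have hx' : x' ∈ D := by
    apply hb; rw [mem_ball, dist_eq_norm]; nlinarith
  refine ⟨hx', ?_⟩
  simp only
  let p : E := (((δ⁻¹ : ℝ)) : ℂ) • (x' - x)
  let u : E := ((((1 - δ) / δ : ℝ) : ℂ) * ξ⁻¹) • (v' - v)
  have hp : ‖p‖ < r / 2 := by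
    simp only [p, norm_smul, Complex.norm_real]
    rw [Real.norm_of_nonneg (by positivity), inv_mul_lt_iff₀ hδ0]; linarith
  have hu : ‖u‖ < r / 2 := by
    simp only [u, norm_smul, Complex.norm_real, norm_mul, norm_inv]
    rw [Real.norm_of_nonneg (by positivity)]
    have : (1 - δ) / δ * ‖ξ‖⁻¹ * ‖v' - v‖ = (1 - δ) * (‖v' - v‖ / (‖ξ‖ * δ)) := by
      field_simp
    rw [this]
    have h2 : ‖v' - v‖ / (‖ξ‖ * δ) < r / 2 := by
      rw [div_lt_iff₀ (by positivity)]; linarith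
    have h3 : 0 ≤ ‖v' - v‖ / (‖ξ‖ * δ) := by positivity
    nlinarith
  let F : ℂ → E := fun ζ => ((1 - δ : ℝ) : ℂ) • f ζ + ((δ : ℝ) : ℂ) • (x + p + ζ • u)
  have hlin : ∀ ζ : ℂ, HasDerivAt (fun ζ : ℂ => ((δ : ℝ) : ℂ) • (x + p + ζ • u)) (((δ : ℝ) : ℂ) • u) ζ := by
    intro ζ
    have h := (((hasDerivAt_id ζ).smul_const u).const_add (x + p)).const_smul ((δ : ℝ) : ℂ)
    rw [one_smul] at h
    exact h
  have hFd : DifferentiableOn ℂ F (ball (0:ℂ) 1) :=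
    (hd.const_smul _).add (fun ζ _ => (hlin ζ).differentiableAt.differentiableWithinAt)
  have hFm : MapsTo F (ball (0:ℂ) 1) D := by
    intro ζ hζ
    have h2 : x + p + ζ • u ∈ D := by
      apply hb
      rw [mem_ball, dist_eq_norm]
      rw [mem_ball, dist_zero_right] at hζ
      have : x + p + ζ • u - x = p + ζ • u := by abel
      rw [this]
      calc _ ≤ ‖p‖ + ‖ζ‖ * ‖u‖ := (norm_add_le _ _).trans (by rw [norm_smul ζ u])
        _ < r := by nlinarith [norm_nonneg u]
    have := hc (hm hζ) h2 hδ1'.le hδ0.le (by ring)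
    simpa only [F, Complex.coe_smul] using this
  have hF0 : F 0 = x' := by
    simp only [F, h0, p, smul_add, smul_smul]
    rw [← Complex.ofReal_mul, mul_inv_cancel₀ hδ0.ne', Complex.ofReal_one, one_smul,
      mul_zero, zero_smul, add_zero, ← add_assoc, ← add_smul]
    simp
  have hFder : HasDerivAt F (((1 - δ : ℝ) : ℂ) • deriv f 0 + ((δ : ℝ) : ℂ) • u) 0 :=
    ((hd.differentiableAt (ball_mem_nhds _ one_pos)).hasDerivAt.const_smul _).add (hlin 0)
  have hd1 : (((1 - δ : ℝ)) : ℂ) ≠ 0 := by exact_mod_cast hδ1'.ne'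
  have hd2 : ((δ : ℝ) : ℂ) ≠ 0 := by exact_mod_cast hδ0.ne'
  have hfin := kobMetric_le (ξ := ξ / ((1 - δ : ℝ) : ℂ)) (v := v') hFd hFm hF0 hFder (by
    simp only [u, smul_add, smul_smul]
    have e1 : ξ / ((1 - δ : ℝ) : ℂ) * ((1 - δ : ℝ) : ℂ) = ξ := by field_simp
    have e2 : ξ / ((1 - δ : ℝ) : ℂ) * (((δ : ℝ) : ℂ) * ((((1 - δ) / δ : ℝ) : ℂ) * ξ⁻¹)) = 1 := by
      rw [Complex.ofReal_div]; field_simp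
    rw [e1, e2, hv]; simp)
  rw [norm_div, Complex.norm_real, Real.norm_of_nonneg hδ1'.le] at hfin
  exact hfin.trans_lt hδc

lemma ac_comp_lipschitz {f : ℝ → ℝ} {φ : ℝ → ℝ} {a b : ℝ} {K : NNReal}
    (hf : AbsolutelyContinuousOnInterval f a b)
    (hφ : LipschitzOnWith K φ (f '' uIcc a b)) :
    AbsolutelyContinuousOnInterval (fun t => φ (f t)) a b := by
  rw [absolutelyContinuousOnInterval_iff] at hf ⊢
  intro ε hε
  obtain ⟨δ, hδ, h⟩ := hf (ε / (K + 1)) (by positivity)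
  refine ⟨δ, hδ, fun I hI hs => ?_⟩
  have h1 := h I hI hs
  have h2 : ∑ i ∈ Finset.range I.1, dist (φ (f (I.2 i).1)) (φ (f (I.2 i).2))
      ≤ ∑ i ∈ Finset.range I.1, K * dist (f (I.2 i).1) (f (I.2 i).2) := by
    apply Finset.sum_le_sum
    intro i hi
    have hm := hI.1 i hi
    exact hφ.dist_le_mul _ (mem_image_of_mem _ hm.1) _ (mem_image_of_mem _ hm.2)
  rw [← Finset.mul_sum] at h2
  rw [lt_div_iff₀ (by positivity)] at h1
  have h3 : 0 ≤ ∑ i ∈ Finset.range I.1, dist (f (I.2 i).1) (f (I.2 i).2) :=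
    Finset.sum_nonneg fun _ _ => dist_nonneg
  nlinarith

lemma gronwall_log {a b : ℝ} (hab : a ≤ b) {h H : ℝ → ℂ} {κ : ℝ → ℝ}
    (hH : IntervalIntegrable H volume a b) (hκ : IntervalIntegrable κ volume a b)
    (hh : ∀ t ∈ Icc a b, h t = h a + ∫ s in a..t, H s) (ha : h a ≠ 0) (hb : h b ≠ 0)
    (hκ0 : ∀ t ∈ Icc a b, 0 ≤ κ t)
    (hle : ∀ t ∈ Icc a b, ‖H t‖ ≤ κ t * ‖h t‖) :
    Real.log ‖h b‖ ≤ Real.log ‖h a‖ + ∫ t in a..b, κ t := by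
  have hapos : 0 < ‖h a‖ := norm_pos_iff.2 ha
  let m : ℝ → ℝ := fun t => ‖h a‖ + ∫ s in a..t, ‖H s‖
  have hsub : ∀ t ∈ Icc a b, IntervalIntegrable H volume a t := fun t ht =>
    hH.mono_set (by rw [uIcc_of_le hab, uIcc_of_le ht.1]; exact Icc_subset_Icc le_rfl ht.2)
  have hm_ge : ∀ t ∈ Icc a b, ‖h t‖ ≤ m t := by
    intro t ht
    rw [hh t ht]
    refine (norm_add_le _ _).trans ?_
    have := intervalIntegral.norm_integral_le_integral_norm (f := H) (μ := volume) ht.1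
    simp only [m]; linarith
  have hm_pos : ∀ t ∈ Icc a b, ‖h a‖ ≤ m t := by
    intro t ht
    have : 0 ≤ ∫ s in a..t, ‖H s‖ := intervalIntegral.integral_nonneg ht.1 fun _ _ => norm_nonneg _
    simp only [m]; linarith
  have hmAC : AbsolutelyContinuousOnInterval m a b := by
    have h1 := hH.norm.absolutelyContinuousOnInterval_intervalIntegral (c := a) (by simp)
    have h2 : AbsolutelyContinuousOnInterval (fun _ : ℝ => ‖h a‖) a b :=
      (LipschitzWith.const _).lipschitzOnWith.absolutelyContinuousOnInterval
    exact h2.add h1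
  have hlip : LipschitzOnWith (Real.toNNReal (‖h a‖⁻¹)) Real.log (m '' uIcc a b) := by
    have : LipschitzOnWith (Real.toNNReal (‖h a‖⁻¹)) Real.log (Ici ‖h a‖) := by
      apply Convex.lipschitzOnWith_of_nnnorm_deriv_le (𝕜 := ℝ)
      · intro x hx
        exact Real.differentiableAt_log (hapos.trans_le hx).ne'
      · intro x hx
        rw [Real.deriv_log, ← NNReal.coe_le_coe, coe_nnnorm, Real.coe_toNNReal _ (by positivity),
          Real.norm_of_nonneg (inv_nonneg.2 (hapos.le.trans hx))]
        exact inv_anti₀ hapos hx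
      · exact convex_Ici _
    refine this.mono ?_
    rintro _ ⟨t, ht, rfl⟩
    rw [uIcc_of_le hab] at ht
    exact hm_pos t ht
  have hAC := ac_comp_lipschitz hmAC hlip
  have hFTC := hAC.integral_deriv_eq_sub
  have hae := hH.norm.ae_hasDerivAt_integral
  have hmono : ∫ t in a..b, deriv (fun t => Real.log (m t)) t ≤ ∫ t in a..b, κ t := by
    apply intervalIntegral.integral_mono_ae_restrict hab hAC.intervalIntegrable_deriv hκ
    rw [EventuallyLE, ae_restrict_iff' measurableSet_Icc]
    filter_upwards [hae] with t ht htm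
    have hmt : HasDerivAt m ‖H t‖ t := by
      have := ht (by rwa [uIcc_of_le hab]) a (by simp)
      exact this.const_add _
    have hp := hapos.trans_le (hm_pos t htm)
    rw [(hmt.log hp.ne').deriv, div_le_iff₀ hp]
    exact (hle t htm).trans (mul_le_mul_of_nonneg_left (hm_ge t htm) (hκ0 t htm))
  have hma : m a = ‖h a‖ := by simp [m]
  rw [hFTC, hma] at hmono
  have := Real.log_le_log (norm_pos_iff.2 hb) (hm_ge b ⟨hab, le_rfl⟩)
  linarith

lemma gronwall_log_rev {a b : ℝ} (hab : a ≤ b) {h H : ℝ → ℂ} {κ : ℝ → ℝ}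
    (hH : IntervalIntegrable H volume a b) (hκ : IntervalIntegrable κ volume a b)
    (hh : ∀ t ∈ Icc a b, h t = h a + ∫ s in a..t, H s) (ha : h a ≠ 0) (hb : h b ≠ 0)
    (hκ0 : ∀ t ∈ Icc a b, 0 ≤ κ t)
    (hle : ∀ t ∈ Icc a b, ‖H t‖ ≤ κ t * ‖h t‖) :
    Real.log ‖h a‖ ≤ Real.log ‖h b‖ + ∫ t in a..b, κ t := by
  have hmem : ∀ t ∈ Icc a b, a + b - t ∈ Icc a b := fun t ht => ⟨by linarith [ht.2], by linarith [ht.1]⟩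
  have key := gronwall_log hab (h := fun t => h (a + b - t)) (H := fun t => - H (a + b - t))
    (κ := fun t => κ (a + b - t)) ?_ ?_ ?_ ?_ ?_ ?_ ?_
  · simpa [intervalIntegral.integral_comp_sub_left] using key
  · have := (hH.comp_sub_left (a + b)).neg.symm
    simpa [Pi.neg_def] using this
  · simpa using (hκ.comp_sub_left (a + b)).symm
  · intro t ht
    have h1 := hh _ (hmem t ht)
    have h2 := hh b ⟨hab, le_rfl⟩
    have e : ∫ s in a..t, - H (a + b - s) = - ∫ s in (a+b-t)..b, H s := by
      rw [intervalIntegral.integral_neg, intervalIntegral.integral_comp_sub_left]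
      simp
    have e2 : (∫ s in a..(a+b-t), H s) + ∫ s in (a+b-t)..b, H s = ∫ s in a..b, H s := by
      apply intervalIntegral.integral_add_adjacent_intervals
      · exact hH.mono_set (by
          rw [uIcc_of_le hab, uIcc_of_le (hmem t ht).1]; exact Icc_subset_Icc le_rfl (hmem t ht).2)
      · exact hH.mono_set (by
          rw [uIcc_of_le hab, uIcc_of_le (hmem t ht).2]; exact Icc_subset_Icc (hmem t ht).1 le_rfl)
    simp only [e, add_sub_cancel_left]
    rw [h1, h2, ← e2]; ring
  · simpa using hb
  · simpa using ha
  · intro t ht; exact hκ0 _ (hmem t ht)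
  · intro t ht; simpa using hle _ (hmem t ht)

lemma IsACWithDeriv.continuousOn [CompleteSpace E] {σ g : ℝ → E} {a b : ℝ} (hab : a ≤ b)
    (h : IsACWithDeriv σ g a b) : ContinuousOn σ (Icc a b) := by
  have h1 : ContinuousOn (fun t => σ a + ∫ s in a..t, g s) (Icc a b) := by
    have := intervalIntegral.continuousOn_primitive_interval' h.1 (left_mem_uIcc)
    rw [uIcc_of_le hab] at this
    exact this.const_add _
  exact h1.congr h.2

lemma kob_integrable [ProperSpace E] {D : Set E} (hD : IsOpen D) (hc : Convex ℝ D)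
    {σ g : ℝ → E} {a b : ℝ} (hab : a ≤ b)
    (h : IsACWithDeriv σ g a b) (hm : MapsTo σ (Icc a b) D) :
    IntervalIntegrable (fun t => kobMetric D (σ t) (g t)) volume a b := by
  letI : MeasurableSpace E := borel E
  haveI : BorelSpace E := ⟨rfl⟩
  have hcont := h.continuousOn hab
  have hcomp : IsCompact (σ '' Icc a b) := isCompact_Icc.image_of_continuousOn hcont
  obtain ⟨r, hr, hsub⟩ := hcomp.exists_thickening_subset_open hD hm.image_subset
  have hball : ∀ t ∈ Icc a b, ball (σ t) r ⊆ D := fun t ht =>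
    (ball_subset_thickening (mem_image_of_mem _ ht) r).trans hsub
  rw [intervalIntegrable_iff_integrableOn_Ioc_of_le hab]
  have hg := h.1
  rw [intervalIntegrable_iff_integrableOn_Ioc_of_le hab] at hg
  let F : E × E → ℝ := (D ×ˢ univ).indicator (fun q => kobMetric D q.1 q.2)
  have hDm : MeasurableSet (D ×ˢ (univ : Set E)) := (hD.prod isOpen_univ).measurableSet
  have hF : Measurable F := by
    apply measurable_of_Iio
    intro c
    rcases le_or_gt c 0 with hc0 | hc0
    · convert MeasurableSet.empty
      ext q
      simp only [mem_preimage, mem_Iio, mem_empty_iff_false, iff_false, not_lt]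
      exact hc0.trans (indicator_nonneg (fun q _ => kobMetric_nonneg _ _ _) q)
    · have : F ⁻¹' Iio c = {q : E × E | q.1 ∈ D ∧ kobMetric D q.1 q.2 < c} ∪ (D ×ˢ (univ : Set E))ᶜ := by
        ext q
        by_cases hq : q.1 ∈ D <;> simp [F, indicator, hq, hc0]
      rw [this]
      exact (kobMetric_usc hD hc c).measurableSet.union hDm.compl
  have hσ : AEMeasurable σ (volume.restrict (Ioc a b)) :=
    (hcont.mono Ioc_subset_Icc_self).aemeasurable measurableSet_Ioc
  have hpair : AEMeasurable (fun t => (σ t, g t)) (volume.restrict (Ioc a b)) :=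
    hσ.prodMk hg.1.aemeasurable
  have hFm := (hF.comp_aemeasurable hpair).aestronglyMeasurable
  have hk : AEStronglyMeasurable (fun t => kobMetric D (σ t) (g t)) (volume.restrict (Ioc a b)) := by
    refine hFm.congr ?_
    rw [EventuallyEq, ae_restrict_iff' measurableSet_Ioc]
    refine ae_of_all _ fun t ht => ?_
    have : σ t ∈ D := hm (Ioc_subset_Icc_self ht)
    simp [F, indicator, this]
  refine Integrable.mono' (hg.norm.div_const r) hk ?_
  rw [ae_restrict_iff' measurableSet_Ioc]
  refine ae_of_all _ fun t ht => ?_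
  rw [Real.norm_of_nonneg (kobMetric_nonneg _ _ _)]
  exact kobMetric_le_ball _ hr (hball t (Ioc_subset_Icc_self ht))

lemma IsACWithDeriv.sub [CompleteSpace E] {σ g : ℝ → E} {a b s t : ℝ} (h : IsACWithDeriv σ g a b)
    (has : a ≤ s) (hst : s ≤ t) (htb : t ≤ b) : IsACWithDeriv σ g s t := by
  have hab : a ≤ b := by linarith
  have hI : ∀ c d, a ≤ c → c ≤ d → d ≤ b → IntervalIntegrable g volume c d := by
    intro c d h1 h2 h3
    exact h.1.mono_set (by rw [uIcc_of_le hab, uIcc_of_le h2]; exact Icc_subset_Icc h1 h3)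
  refine ⟨hI s t has hst htb, fun u hu => ?_⟩
  rw [h.2 u ⟨has.trans hu.1, hu.2.trans htb⟩, h.2 s ⟨has, hst.trans htb⟩, add_assoc]
  congr 1
  rw [intervalIntegral.integral_add_adjacent_intervals]
  · exact hI a s le_rfl has (hst.trans htb)
  · exact hI s u has hu.1 (hu.2.trans htb)

lemma length_lower [ProperSpace E] {D : Set E} (hD : IsOpen D) (hc : Convex ℝ D)
    {σ g : ℝ → E} {a b : ℝ} (hab : a ≤ b)
    (h : IsACWithDeriv σ g a b) (hm : MapsTo σ (Icc a b) D) (p : E) (l : E →L[ℂ] ℂ)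
    (hl : ∀ u ∈ D, 0 < (l (u - p)).re) :
    Real.log ‖l (σ b - p)‖ ≤ Real.log ‖l (σ a - p)‖ + 2 * ∫ t in a..b, kobMetric D (σ t) (g t) ∧
    Real.log ‖l (σ a - p)‖ ≤ Real.log ‖l (σ b - p)‖ + 2 * ∫ t in a..b, kobMetric D (σ t) (g t) := by
  have hne : ∀ u ∈ D, l (u - p) ≠ 0 := fun u hu h0 => by
    have := hl u hu; simp [h0] at this
  have hκ := (kob_integrable hD hc hab h hm).const_mul 2
  have hlg : IntervalIntegrable (fun t => l (g t)) volume a b :=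
    ⟨l.integrable_comp h.1.1, l.integrable_comp h.1.2⟩
  have hh : ∀ t ∈ Icc a b, l (σ t - p) = l (σ a - p) + ∫ s in a..t, l (g s) := by
    intro t ht
    rw [h.2 t ht, ContinuousLinearMap.intervalIntegral_comp_comm, ← map_add]
    · congr 1; abel
    · exact h.1.mono_set (by rw [uIcc_of_le hab, uIcc_of_le ht.1]; exact Icc_subset_Icc le_rfl ht.2)
  have hA := hne _ (hm (left_mem_Icc.2 hab))
  have hB := hne _ (hm (right_mem_Icc.2 hab))
  have h0 : ∀ t ∈ Icc a b, 0 ≤ 2 * kobMetric D (σ t) (g t) := fun t _ => by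
    have := kobMetric_nonneg D (σ t) (g t); positivity
  have hle : ∀ t ∈ Icc a b, ‖l (g t)‖ ≤ 2 * kobMetric D (σ t) (g t) * ‖l (σ t - p)‖ := fun t ht =>
    kobMetric_lower hD (hm ht) _ _ _ hl
  rw [← intervalIntegral.integral_const_mul]
  exact ⟨gronwall_log hab (h := fun t => l (σ t - p)) hlg hκ hh hA hB h0 hle,
    gronwall_log_rev hab (h := fun t => l (σ t - p)) hlg hκ hh hA hB h0 hle⟩

lemma kobDistSet_nonempty [CompleteSpace E] {D : Set E} (hc : Convex ℝ D) {z w : E} (hz : z ∈ D) (hw : w ∈ D) :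
    { r : ℝ | ∃ (a b : ℝ) (σ g : ℝ → E), a ≤ b ∧
    IsACWithDeriv σ g a b ∧ MapsTo σ (Icc a b) D ∧ σ a = z ∧ σ b = w ∧
    r = ∫ t in a..b, kobMetric D (σ t) (g t) }.Nonempty := by
  refine ⟨_, 0, 1, fun t => z + t • (w - z), fun _ => w - z, zero_le_one, ⟨by simp, ?_⟩, ?_, by simp, by simp, rfl⟩
  · intro t ht; simp [smul_sub]
  · intro t ht
    exact hc.add_smul_sub_mem hz hw ht

lemma kobDist_lower [ProperSpace E] {D : Set E} (hD : IsOpen D) (hc : Convex ℝ D)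
    {p₁ p₂ : E} {l₁ l₂ : E →L[ℂ] ℂ} {r : ℝ} (hr : 0 < r)
    (hl₁ : ∀ u ∈ D, 0 < (l₁ (u - p₁)).re) (hl₂ : ∀ u ∈ D, 0 < (l₂ (u - p₂)).re)
    (hdis : ∀ u ∈ D, ‖l₁ (u - p₁)‖ ≤ r → ‖l₂ (u - p₂)‖ ≤ r → False)
    {z w : E} (hz : z ∈ D) (hw : w ∈ D) (hzr : ‖l₁ (z - p₁)‖ ≤ r) (hwr : ‖l₂ (w - p₂)‖ ≤ r) :
    Real.log r - Real.log ‖l₁ (z - p₁)‖ / 2 - Real.log ‖l₂ (w - p₂)‖ / 2 ≤ kobDist D z w := by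
  apply le_csInf (kobDistSet_nonempty hc hz hw)
  rintro _ ⟨a, b, σ, g, hab, hac, hm, rfl, rfl, rfl⟩
  have hcont := hac.continuousOn hab
  have hc1 : ContinuousOn (fun t => ‖l₁ (σ t - p₁)‖) (Icc a b) :=
    (l₁.continuous.comp_continuousOn (hcont.sub continuousOn_const)).norm
  have hc2 : ContinuousOn (fun t => ‖l₂ (σ t - p₂)‖) (Icc a b) :=
    (l₂.continuous.comp_continuousOn (hcont.sub continuousOn_const)).norm
  have hK1 : IsCompact (Icc a b ∩ (fun t => ‖l₁ (σ t - p₁)‖) ⁻¹' Ici r) :=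
    isCompact_Icc.of_isClosed_subset (hc1.preimage_isClosed_of_isClosed isClosed_Icc isClosed_Ici)
      inter_subset_left
  have hK2 : IsCompact (Icc a b ∩ (fun t => ‖l₂ (σ t - p₂)‖) ⁻¹' Ici r) :=
    isCompact_Icc.of_isClosed_subset (hc2.preimage_isClosed_of_isClosed isClosed_Icc isClosed_Ici)
      inter_subset_left
  obtain ⟨t₁, ⟨ht₁, ht₁r⟩, hleast⟩ := hK1.exists_isLeast
    ⟨b, right_mem_Icc.2 hab, le_of_not_ge fun h => hdis _ hw h hwr⟩
  obtain ⟨t₂, ⟨ht₂, ht₂r⟩, hgreat⟩ := hK2.exists_isGreatest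
    ⟨a, left_mem_Icc.2 hab, le_of_not_ge fun h => hdis _ hz hzr h⟩
  simp only [mem_preimage, mem_Ici] at ht₁r ht₂r
  have h12 : t₁ ≤ t₂ := by
    by_contra! hlt
    have hmid : (t₁ + t₂) / 2 ∈ Icc a b := ⟨by linarith [ht₁.1, ht₂.1], by linarith [ht₁.2, ht₂.2]⟩
    refine hdis _ (hm hmid) (le_of_not_ge fun h => ?_) (le_of_not_ge fun h => ?_)
    · have := hleast ⟨hmid, h⟩; linarith
    · have := hgreat ⟨hmid, h⟩; linarith
  have hk := kob_integrable hD hc hab hac hm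
  have hI : ∀ c d, a ≤ c → c ≤ d → d ≤ b →
      IntervalIntegrable (fun t => kobMetric D (σ t) (g t)) volume c d := by
    intro c d h1 h2 h3
    exact hk.mono_set (by rw [uIcc_of_le hab, uIcc_of_le h2]; exact Icc_subset_Icc h1 h3)
  have e1 := intervalIntegral.integral_add_adjacent_intervals (hI a t₁ le_rfl ht₁.1 ht₁.2)
    (hI t₁ t₂ ht₁.1 h12 ht₂.2)
  have e2 := intervalIntegral.integral_add_adjacent_intervals (hI a t₂ le_rfl ht₂.1 ht₂.2)
    (hI t₂ b ht₂.1 ht₂.2 le_rfl)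
  have e3 : 0 ≤ ∫ t in t₁..t₂, kobMetric D (σ t) (g t) :=
    intervalIntegral.integral_nonneg h12 fun _ _ => kobMetric_nonneg _ _ _
  have L1 := (length_lower hD hc ht₁.1 (hac.sub le_rfl ht₁.1 ht₁.2)
    (hm.mono_left (Icc_subset_Icc le_rfl ht₁.2)) p₁ l₁ hl₁).1
  have L2 := (length_lower hD hc ht₂.2 (hac.sub ht₂.1 ht₂.2 le_rfl)
    (hm.mono_left (Icc_subset_Icc ht₂.1 le_rfl)) p₂ l₂ hl₂).2
  have g1 := Real.log_le_log hr ht₁r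
  have g2 := Real.log_le_log hr ht₂r
  linarith

lemma kobDist_le {D : Set E} {a b : ℝ} {σ g : ℝ → E} (hab : a ≤ b)
    (h : IsACWithDeriv σ g a b) (hm : MapsTo σ (Icc a b) D) :
    kobDist D (σ a) (σ b) ≤ ∫ t in a..b, kobMetric D (σ t) (g t) := by
  apply csInf_le
  · refine ⟨0, ?_⟩
    rintro _ ⟨a, b, σ, g, hab, hac, hm, -, -, rfl⟩
    exact intervalIntegral.integral_nonneg hab fun _ _ => kobMetric_nonneg _ _ _
  · exact ⟨a, b, σ, g, hab, h, hm, rfl, rfl, rfl⟩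

lemma kobDist_comm_le [CompleteSpace E] {D : Set E} (hc : Convex ℝ D) {z w : E} (hz : z ∈ D) (hw : w ∈ D) :
    kobDist D z w ≤ kobDist D w z := by
  conv_rhs => unfold kobDist
  apply le_csInf (kobDistSet_nonempty hc hw hz)
  rintro _ ⟨a, b, σ, g, hab, hac, hm, rfl, rfl, rfl⟩
  have hmem : ∀ t ∈ Icc a b, a + b - t ∈ Icc a b := fun t ht => ⟨by linarith [ht.2], by linarith [ht.1]⟩
  have key := kobDist_le (D := D) (σ := fun t => σ (a + b - t)) (g := fun t => - g (a + b - t)) hab ?_ ?_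
  · simp only [add_sub_cancel_left, add_sub_cancel_right, kobMetric_neg] at key
    refine key.trans (le_of_eq ?_)
    rw [intervalIntegral.integral_comp_sub_left (fun t => kobMetric D (σ t) (g t))]
    simp
  · refine ⟨?_, ?_⟩
    · have := (hac.1.comp_sub_left (a + b)).neg.symm
      simpa [Pi.neg_def] using this
    · intro t ht
      have h1 := (hac.sub (hmem t ht).1 (hmem t ht).2 le_rfl).2 b ⟨(hmem t ht).2, le_rfl⟩
      have e : ∫ s in a..t, - g (a + b - s) = - ∫ s in (a+b-t)..b, g s := by
        rw [intervalIntegral.integral_neg, intervalIntegral.integral_comp_sub_left]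
        simp
      simp only [e, add_sub_cancel_left]
      rw [h1]; abel
  · intro t ht; exact hm (hmem t ht)

lemma IsLocalDefiningFn.at {D : Set E} {x ξ : E} {W : Set E} {ρ : E → ℝ}
    (h : IsLocalDefiningFn D x W ρ) (hξ : ξ ∈ W) : IsLocalDefiningFn D ξ W ρ :=
  ⟨h.1, hξ, h.2.2⟩

lemma IsLocalDefiningFn.hasFDerivAt {D : Set E} {ξ : E} {W : Set E} {ρ : E → ℝ}
    (h : IsLocalDefiningFn D ξ W ρ) : HasFDerivAt ρ (fderiv ℝ ρ ξ) ξ :=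
  ((h.2.2.1.differentiableOn one_ne_zero).differentiableAt (h.1.mem_nhds h.2.1)).hasFDerivAt

lemma IsLocalDefiningFn.zero {D : Set E} {ξ : E} {W : Set E} {ρ : E → ℝ}
    (h : IsLocalDefiningFn D ξ W ρ) (hξ : ξ ∈ frontier D) : ρ ξ = 0 := by
  have : ξ ∈ frontier D ∩ W := ⟨hξ, h.2.1⟩
  rw [h.2.2.2.2.2] at this
  exact this.2

lemma IsLocalDefiningFn.mem_iff {D : Set E} {ξ p : E} {W : Set E} {ρ : E → ℝ}
    (h : IsLocalDefiningFn D ξ W ρ) (hp : p ∈ W) : p ∈ D ↔ ρ p < 0 := by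
  have : p ∈ D ∩ W ↔ p ∈ {x ∈ W | ρ x < 0} := by rw [h.2.2.2.2.1]
  simpa [hp] using this

lemma ldf_slope {D : Set E} {ξ : E} {W : Set E} {ρ : E → ℝ}
    (h : IsLocalDefiningFn D ξ W ρ) (hξ : ξ ∈ frontier D) (v : E) :
    (fderiv ℝ ρ ξ v < 0 → ∀ᶠ t : ℝ in 𝓝[>] 0, ξ + t • v ∈ D) ∧
    (0 < fderiv ℝ ρ ξ v → ∀ᶠ t : ℝ in 𝓝[>] 0, ξ + t • v ∉ D) := by
  have hline : HasDerivAt (fun t : ℝ => ξ + t • v) v 0 := by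
    simpa using ((hasDerivAt_id (0:ℝ)).smul_const v).const_add ξ
  have hd : HasDerivAt (fun t : ℝ => ρ (ξ + t • v)) (fderiv ℝ ρ ξ v) 0 := by
    have h1 : HasFDerivAt ρ (fderiv ℝ ρ ξ) (ξ + (0:ℝ) • v) := by simpa using h.hasFDerivAt
    exact h1.comp_hasDerivAt (0:ℝ) hline
  have hs := (hasDerivAt_iff_tendsto_slope_zero.1 hd).mono_left
    (nhdsWithin_mono (0:ℝ) (fun t (ht : t ∈ Ioi (0:ℝ)) => (ne_of_gt ht : t ≠ 0)))
  simp only [zero_add, zero_smul, add_zero, h.zero hξ, sub_zero, smul_eq_mul] at hs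
  have hW : ∀ᶠ t : ℝ in 𝓝[>] 0, ξ + t • v ∈ W := by
    apply nhdsWithin_le_nhds
    apply hline.continuousAt.eventually
    simpa using h.1.mem_nhds h.2.1
  constructor
  · intro hneg
    filter_upwards [hW, hs.eventually_lt_const hneg, self_mem_nhdsWithin] with t h1 h2 h3
    rw [h.mem_iff h1]
    have h3 : 0 < t := h3
    by_contra! h4
    have := mul_nonneg (inv_pos.2 h3).le h4
    linarith
  · intro hpos
    filter_upwards [hW, hs.eventually_const_lt hpos, self_mem_nhdsWithin] with t h1 h2 h3
    rw [h.mem_iff h1]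
    have h3 : 0 < t := h3
    intro h4
    have := mul_neg_of_pos_of_neg (inv_pos.2 h3) h4
    linarith

lemma open_neg_of_nonpos {D : Set E} (hD : IsOpen D) {L : E →L[ℝ] ℝ} (hL : L ≠ 0) {p : E}
    (h : ∀ u ∈ D, L (u - p) ≤ 0) : ∀ u ∈ D, L (u - p) < 0 := by
  intro u hu
  obtain ⟨v, hv⟩ : ∃ v, 0 < L v := by
    by_contra! hcon
    apply hL
    ext v
    have h1 := hcon v
    have h2 := hcon (-v)
    simp at h2
    simp; linarith
  have hcont : ContinuousAt (fun t : ℝ => u + t • v) 0 := by fun_prop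
  have hev : ∀ᶠ t : ℝ in 𝓝[>] 0, u + t • v ∈ D := by
    apply nhdsWithin_le_nhds
    apply hcont.eventually
    simpa using hD.mem_nhds hu
  obtain ⟨t, ht, ht0⟩ := (hev.and self_mem_nhdsWithin).exists
  have ht0 : 0 < t := ht0
  have h1 := h _ ht
  have e : u + t • v - p = (u - p) + t • v := by abel
  rw [e, map_add, map_smul, smul_eq_mul] at h1
  have := mul_pos ht0 hv
  linarith

lemma ldf_support {D : Set E} (hD : IsOpen D) (hc : Convex ℝ D) {ξ : E} {W : Set E} {ρ : E → ℝ}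
    (h : IsLocalDefiningFn D ξ W ρ) (hξ : ξ ∈ frontier D) :
    ∀ u ∈ D, fderiv ℝ ρ ξ (u - ξ) < 0 := by
  apply open_neg_of_nonpos hD (h.2.2.2.1 ξ h.2.1)
  intro u hu
  by_contra! hpos
  have h1 := (ldf_slope h hξ (u - ξ)).2 hpos
  have h2 : ∀ᶠ t : ℝ in 𝓝[>] 0, t ∈ Ioc (0:ℝ) 1 := Ioc_mem_nhdsGT one_pos
  obtain ⟨t, ht1, ht2⟩ := (h1.and h2).exists
  apply ht1
  have := hc.add_smul_sub_mem_interior' (frontier_subset_closure hξ) (hD.interior_eq.symm ▸ hu) ht2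
  exact interior_subset this

lemma ldf_kernel {D : Set E} (hD : IsOpen D) (hc : Convex ℝ D) {x u : E} {W W' : Set E} {ρ ρ' : E → ℝ}
    (h : IsLocalDefiningFn D x W ρ) (hx : x ∈ frontier D)
    (h' : IsLocalDefiningFn D u W' ρ') (hu : u ∈ frontier D)
    (hzero : fderiv ℝ ρ x (u - x) = 0) (v : E) :
    fderiv ℝ ρ x v = 0 ↔ fderiv ℝ ρ' u v = 0 := by
  set L := fderiv ℝ ρ x with hLdef
  set L' := fderiv ℝ ρ' u with hLdef'
  have hL : L ≠ 0 := h.2.2.2.1 x h.2.1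
  have hL' : L' ≠ 0 := h'.2.2.2.1 u h'.2.1
  have key : ∀ v, L' v < 0 → L v ≤ 0 := by
    intro v hv
    obtain ⟨t, ht, ht0⟩ := (((ldf_slope h' hu v).1 hv).and self_mem_nhdsWithin).exists
    have ht0 : 0 < t := ht0
    have h1 := ldf_support hD hc h hx _ ht
    have e : u + t • v - x = (u - x) + t • v := by abel
    rw [e, map_add, hzero, map_smul, smul_eq_mul, zero_add] at h1
    by_contra! h2
    have := mul_pos ht0 h2
    linarith
  obtain ⟨v₀, hv₀⟩ : ∃ v, L' v = -1 := by
    obtain ⟨w, hw⟩ : ∃ w, L' w ≠ 0 := by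
      by_contra! hcon
      exact hL' (by ext v; simpa using hcon v)
    exact ⟨(-(L' w)⁻¹) • w, by simp [hw]⟩
  have ker : ∀ v, L' v = 0 → L v ≤ 0 := by
    intro v hv
    by_contra! hpos
    obtain ⟨t, ht0, ht⟩ : ∃ t : ℝ, 0 < t ∧ t * |L v₀| < L v := by
      refine ⟨L v / (2 * (|L v₀| + 1)), by positivity, ?_⟩
      rw [div_mul_eq_mul_div, div_lt_iff₀ (by positivity)]
      nlinarith [abs_nonneg (L v₀)]
    have := key (v + t • v₀) (by simp [hv, hv₀]; exact ht0)
    simp at this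
    have h3 := neg_abs_le (L v₀)
    nlinarith
  have ker0 : ∀ v, L' v = 0 → L v = 0 := by
    intro v hv
    have h1 := ker v hv
    have h2 := ker (-v) (by simp [hv])
    simp at h2
    linarith
  have form : ∀ v, L v = - L' v * L v₀ := by
    intro v
    have := ker0 (v + L' v • v₀) (by simp [hv₀])
    simp at this
    linarith
  have hne : L v₀ ≠ 0 := by
    intro h0
    exact hL (by ext v; rw [form v, h0]; simp)
  rw [form v]
  simp [hne]

lemma tangent_eq {D : Set E} (hD : IsOpen D) (hc : Convex ℝ D) {x u : E} {W W' : Set E} {ρ ρ' : E → ℝ}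
    (h : IsLocalDefiningFn D x W ρ) (hx : x ∈ frontier D)
    (h' : IsLocalDefiningFn D u W' ρ') (hu : u ∈ frontier D)
    (hzero : u ∈ complexTangentHyperplane ρ x) :
    complexTangentHyperplane ρ x = complexTangentHyperplane ρ' u := by
  obtain ⟨h1, h2⟩ := hzero
  have hk := ldf_kernel hD hc h hx h' hu h1
  ext w
  simp only [complexTangentHyperplane, Set.mem_ofPred_eq]
  have e : w - x = (w - u) + (u - x) := by abel
  rw [← hk, ← hk, e, smul_add, map_add, map_add, h1, h2, add_zero, add_zero]

/-- complexification of minus a real functional -/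
noncomputable def cplx (L : E →L[ℝ] ℝ) : E →L[ℂ] ℂ := StrongDual.extendRCLikeₗᵢ (𝕜 := ℂ) (-L)

lemma cplx_norm (L : E →L[ℝ] ℝ) : ‖cplx L‖ = ‖L‖ := by
  unfold cplx; rw [LinearIsometryEquiv.norm_map, norm_neg]

lemma cplx_re (L : E →L[ℝ] ℝ) (v : E) : (cplx L v).re = - L v := by
  exact (StrongDual.re_extendRCLike_apply (𝕜 := ℂ) (-L) v).trans (by simp)

lemma cplx_im (L : E →L[ℝ] ℝ) (v : E) : (cplx L v).im = L (Complex.I • v) := by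
  exact (StrongDual.im_extendRCLike_apply (𝕜 := ℂ) (-L) v).trans (by simp)

lemma cplx_cont : Continuous (cplx : (E →L[ℝ] ℝ) → (E →L[ℂ] ℂ)) := by
  unfold cplx
  exact (LinearIsometryEquiv.continuous _).comp continuous_neg

lemma mem_tangent_iff (ρ : E → ℝ) (x w : E) :
    w ∈ complexTangentHyperplane ρ x ↔ cplx (fderiv ℝ ρ x) (w - x) = 0 := by
  rw [Complex.ext_iff, cplx_re, cplx_im]
  simp only [complexTangentHyperplane, Set.mem_ofPred_eq, Complex.zero_re, Complex.zero_im,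
    neg_eq_zero]

lemma disjointness [ProperSpace E] {D : Set E} (hD : IsOpen D) (hb : Bornology.IsBounded D)
    (hc : Convex ℝ D)
    {x y : E} {W W' : Set E} {ρ ρ' : E → ℝ}
    (hloc : ∀ u ∈ frontier D, ∃ W ρ, IsLocalDefiningFn D u W ρ)
    (h : IsLocalDefiningFn D x W ρ) (hx : x ∈ frontier D)
    (h' : IsLocalDefiningFn D y W' ρ') (hy : y ∈ frontier D)
    (hne : complexTangentHyperplane ρ x ≠ complexTangentHyperplane ρ' y) :
    ∃ r > 0, ∀ᶠ q : E × E in 𝓝 (x, y), ∀ u ∈ D,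
      ‖cplx (fderiv ℝ ρ q.1) (u - q.1)‖ ≤ r → ‖cplx (fderiv ℝ ρ' q.2) (u - q.2)‖ ≤ r → False := by
  have hK : IsCompact (closure D) := hb.isCompact_closure
  let Φ : (E × E) → E → ℝ := fun q u =>
    ‖cplx (fderiv ℝ ρ q.1) (u - q.1)‖ + ‖cplx (fderiv ℝ ρ' q.2) (u - q.2)‖
  have c1 : ContinuousAt (fderiv ℝ ρ) x :=
    (h.2.2.1.continuousOn_fderiv_of_isOpen h.1 le_rfl).continuousAt (h.1.mem_nhds h.2.1)
  have c2 : ContinuousAt (fderiv ℝ ρ') y :=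
    (h'.2.2.1.continuousOn_fderiv_of_isOpen h'.1 le_rfl).continuousAt (h'.1.mem_nhds h'.2.1)
  have hΦ : ∀ u, ContinuousAt (fun s : (E × E) × E => Φ s.1 s.2) ((x, y), u) := by
    intro u
    have d1 : ContinuousAt (fun s : (E × E) × E => cplx (fderiv ℝ ρ s.1.1)) ((x, y), u) :=
      cplx_cont.continuousAt.comp (ContinuousAt.comp (g := fderiv ℝ ρ) c1 (by fun_prop))
    have d2 : ContinuousAt (fun s : (E × E) × E => cplx (fderiv ℝ ρ' s.1.2)) ((x, y), u) :=
      cplx_cont.continuousAt.comp (ContinuousAt.comp (g := fderiv ℝ ρ') c2 (by fun_prop))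
    exact ((d1.clm_apply (by fun_prop)).norm).add ((d2.clm_apply (by fun_prop)).norm)
  have hpos : ∀ u ∈ closure D, 0 < Φ (x, y) u := by
    intro u hu
    by_contra! hle
    have e1 : cplx (fderiv ℝ ρ x) (u - x) = 0 := by
      rw [← norm_le_zero_iff]; simp only [Φ] at hle
      linarith [norm_nonneg (cplx (fderiv ℝ ρ' y) (u - y))]
    have e2 : cplx (fderiv ℝ ρ' y) (u - y) = 0 := by
      rw [← norm_le_zero_iff]; simp only [Φ] at hle
      linarith [norm_nonneg (cplx (fderiv ℝ ρ x) (u - x))]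
    rw [← mem_tangent_iff] at e1 e2
    have huf : u ∈ frontier D := by
      rw [hD.frontier_eq]
      refine ⟨hu, fun huD => ?_⟩
      have := ldf_support hD hc h hx u huD
      linarith [e1.1]
    obtain ⟨W'', ρ'', h''⟩ := hloc u huf
    exact hne ((tangent_eq hD hc h hx h'' huf e1).trans (tangent_eq hD hc h' hy h'' huf e2).symm)
  have hcontΦ : ContinuousOn (Φ (x, y)) (closure D) := by
    apply Continuous.continuousOn
    simp only [Φ]; fun_prop
  obtain ⟨u₀, hu₀, hmin⟩ := hK.exists_isMinOn ⟨x, frontier_subset_closure hx⟩ hcontΦ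
  refine ⟨Φ (x, y) u₀ / 4, by have := hpos u₀ hu₀; positivity, ?_⟩
  have hev : ∀ᶠ q in 𝓝 (x, y), ∀ u ∈ closure D, Φ (x, y) u₀ / 2 < Φ q u := by
    apply hK.eventually_forall_of_forall_eventually
    intro u hu
    apply (hΦ u).eventually_const_lt
    have h1 := hpos u₀ hu₀
    have h2 : Φ (x, y) u₀ ≤ Φ (x, y) u := hmin hu
    simp only
    linarith
  filter_upwards [hev] with q hq u hu h1 h2
  have := hq u (subset_closure hu)
  simp only [Φ] at *
  linarith

lemma local_data {D : Set E} {x : E} {W : Set E} {ρ : E → ℝ} {M ε : ℝ} (hM : 0 < M) (hε : 0 < ε)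
    (h : IsLocalDefiningFn D x W ρ)
    (hH : ∀ x ∈ W, ∀ y ∈ W, ‖fderiv ℝ ρ x - fderiv ℝ ρ y‖ ≤ M * ‖x - y‖ ^ ε) :
    ∃ R M' C₀ : ℝ, 0 < R ∧ 0 < M' ∧ 0 < C₀ ∧
      ∀ ξ ∈ frontier D, ‖ξ - x‖ < R → ξ ∈ W ∧ ‖fderiv ℝ ρ ξ‖ ≤ C₀ ∧
        ∀ p, ‖p - ξ‖ < R →
          fderiv ℝ ρ ξ (p - ξ) + M' * ‖fderiv ℝ ρ ξ‖ * ‖p - ξ‖ ^ (min ε 1) * ‖p - ξ‖ < 0 → p ∈ D := by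
  have c1 : ContinuousAt (fderiv ℝ ρ) x :=
    (h.2.2.1.continuousOn_fderiv_of_isOpen h.1 le_rfl).continuousAt (h.1.mem_nhds h.2.1)
  have hc0 : 0 < ‖fderiv ℝ ρ x‖ := norm_pos_iff.2 (h.2.2.2.1 x h.2.1)
  set c := ‖fderiv ℝ ρ x‖ with hc
  have e1 : ∀ᶠ u in 𝓝 x, c / 2 < ‖fderiv ℝ ρ u‖ := by
    apply c1.norm.eventually_const_lt; simp only [← hc]; linarith
  have e2 : ∀ᶠ u in 𝓝 x, ‖fderiv ℝ ρ u‖ < 2 * c := by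
    apply c1.norm.eventually_lt_const; simp only [← hc]; linarith
  obtain ⟨δ, hδ, hball⟩ := Metric.eventually_nhds_iff_ball.1 ((e1.and e2).and (h.1.mem_nhds h.2.1))
  refine ⟨min (δ / 2) 1, M / (c / 2), 2 * c, by positivity, by positivity, by positivity, ?_⟩
  intro ξ hξ hξR
  have hξδ : ‖ξ - x‖ < δ / 2 := lt_of_lt_of_le hξR (min_le_left _ _)
  obtain ⟨⟨h1, h2⟩, h3⟩ := hball ξ (by rw [mem_ball_iff_norm]; linarith)
  refine ⟨h3, h2.le, ?_⟩
  intro p hp hneg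
  have hpδ : ‖p - ξ‖ < δ / 2 := lt_of_lt_of_le hp (min_le_left _ _)
  have hp1 : ‖p - ξ‖ < 1 := lt_of_lt_of_le hp (min_le_right _ _)
  have hseg : ∀ u ∈ segment ℝ ξ p, u ∈ W ∧ ‖u - ξ‖ ≤ ‖p - ξ‖ := by
    intro u hu
    have hu' : ‖u - ξ‖ ≤ ‖p - ξ‖ := by
      obtain ⟨a, b, ha, hb, hab, rfl⟩ := hu
      have : a • ξ + b • p - ξ = b • (p - ξ) := by
        have : a = 1 - b := by linarith
        rw [this, sub_smul, smul_sub, one_smul]; abel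
      rw [this, norm_smul, Real.norm_of_nonneg hb]
      nlinarith [norm_nonneg (p - ξ)]
    refine ⟨(hball u ?_).2, hu'⟩
    rw [mem_ball_iff_norm]
    calc ‖u - x‖ = ‖(u - ξ) + (ξ - x)‖ := by congr 1; abel
      _ ≤ ‖u - ξ‖ + ‖ξ - x‖ := norm_add_le _ _
      _ < δ := by linarith
  have hpW : p ∈ W := (hseg p (right_mem_segment ℝ ξ p)).1
  have hmv := (convex_segment (𝕜 := ℝ) ξ p).norm_image_sub_le_of_norm_hasFDerivWithin_le'
    (f := ρ) (f' := fderiv ℝ ρ) (φ := fderiv ℝ ρ ξ) (C := M * ‖p - ξ‖ ^ (min ε 1))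
    (fun u hu => ((h.at (hseg u hu).1).hasFDerivAt).hasFDerivWithinAt)
    (fun u hu => by
      refine (hH u (hseg u hu).1 ξ h3).trans ?_
      apply mul_le_mul_of_nonneg_left _ hM.le
      calc ‖u - ξ‖ ^ ε ≤ ‖p - ξ‖ ^ ε :=
            Real.rpow_le_rpow (norm_nonneg _) (hseg u hu).2 hε.le
        _ ≤ ‖p - ξ‖ ^ (min ε 1) := by
            rcases (norm_nonneg (p - ξ)).eq_or_lt with h0 | h0
            · rw [← h0, Real.zero_rpow hε.ne', Real.zero_rpow (by positivity)]
            · exact Real.rpow_le_rpow_of_exponent_ge h0 hp1.le (min_le_left _ _))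
    (left_mem_segment ℝ ξ p) (right_mem_segment ℝ ξ p)
  rw [(h.at h3).zero hξ, sub_zero, Real.norm_eq_abs] at hmv
  rw [h.mem_iff hpW]
  have h4 := (abs_le.1 hmv).2
  have h5 : M * ‖p - ξ‖ ^ (min ε 1) * ‖p - ξ‖ ≤
      M / (c / 2) * ‖fderiv ℝ ρ ξ‖ * ‖p - ξ‖ ^ (min ε 1) * ‖p - ξ‖ := by
    have : M ≤ M / (c / 2) * ‖fderiv ℝ ρ ξ‖ := by
      rw [div_mul_eq_mul_div, le_div_iff₀ (by positivity)]
      exact mul_le_mul_of_nonneg_left h1.le hM.le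
    gcongr
  linarith

lemma nearest [ProperSpace E] {D : Set E} (hD : IsOpen D) {x z : E} (hx : x ∈ frontier D)
    (hz : z ∈ D) : ∃ ξ ∈ frontier D, 0 < ‖z - ξ‖ ∧ ball z ‖z - ξ‖ ⊆ D ∧ ‖z - ξ‖ ≤ ‖z - x‖ := by
  have hxc : x ∈ Dᶜ := by rw [hD.frontier_eq] at hx; exact hx.2
  obtain ⟨ξ, hξ, hd⟩ := hD.isClosed_compl.exists_infDist_eq_dist ⟨x, hxc⟩ z
  have hb : ball z ‖z - ξ‖ ⊆ D := by
    rw [← dist_eq_norm, ← hd]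
    have := Metric.ball_infDist_compl_subset (s := D) (x := z)
    exact this
  have hpos : 0 < ‖z - ξ‖ := by
    rw [norm_pos_iff, sub_ne_zero]
    rintro rfl; exact hξ hz
  refine ⟨ξ, ?_, hpos, hb, ?_⟩
  · rw [hD.frontier_eq]
    refine ⟨?_, hξ⟩
    apply closure_mono hb
    rw [closure_ball z hpos.ne', mem_closedBall, dist_comm, dist_eq_norm]
  · rw [← dist_eq_norm, ← dist_eq_norm, ← hd]
    exact Metric.infDist_le_dist_of_mem hxc

lemma normal_eq {D : Set E} {ξ z : E} {L : E →L[ℝ] ℝ} (hL : ∀ u ∈ D, L (u - ξ) < 0)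
    (hpos : 0 < ‖z - ξ‖) (hb : ball z ‖z - ξ‖ ⊆ D) :
    cplx L (z - ξ) = ((‖L‖ * ‖z - ξ‖ : ℝ) : ℂ) := by
  set s := ‖z - ξ‖ with hs
  have hcl : ∀ u ∈ closedBall z s, L (u - ξ) ≤ 0 := by
    intro u hu
    rw [← closure_ball z hpos.ne'] at hu
    have hcl : IsClosed {u | L (u - ξ) ≤ 0} := isClosed_le (by fun_prop) continuous_const
    exact closure_minimal (fun u hu => (hL u (hb hu)).le) hcl hu
  have hbound : ∀ v, L v ≤ (-L (z - ξ) / s) * ‖v‖ := by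
    intro v
    rcases eq_or_ne v 0 with rfl | hv
    · simp
    have hv' : 0 < ‖v‖ := norm_pos_iff.2 hv
    have h1 := hcl (z + (s / ‖v‖) • v) (by
      rw [mem_closedBall_iff_norm, add_sub_cancel_left, norm_smul, Real.norm_of_nonneg (by positivity)]
      field_simp; rfl)
    have e : z + (s / ‖v‖) • v - ξ = (z - ξ) + (s / ‖v‖) • v := by abel
    rw [e, map_add, map_smul, smul_eq_mul] at h1
    rw [div_mul_eq_mul_div, le_div_iff₀ hpos]
    rw [div_mul_eq_mul_div] at h1
    have h2 : s * L v / ‖v‖ ≤ -L (z - ξ) := by linarith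
    rw [div_le_iff₀ hv'] at h2
    linarith
  have hneg : L (z - ξ) ≤ 0 := hcl z (mem_closedBall_self hpos.le)
  have hn : ‖L‖ ≤ -L (z - ξ) / s := by
    apply L.opNorm_le_bound (div_nonneg (by linarith) hpos.le)
    intro v
    rw [Real.norm_eq_abs, abs_le]
    have h1 := hbound v
    have h2 := hbound (-v)
    rw [map_neg, norm_neg] at h2
    constructor <;> linarith
  rw [le_div_iff₀ hpos] at hn
  have hre := cplx_re L (z - ξ)
  have hnorm : ‖cplx L (z - ξ)‖ ≤ ‖L‖ * s := by
    have := (cplx L).le_opNorm (z - ξ)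
    rwa [cplx_norm] at this
  have hle := Complex.re_le_norm (cplx L (z - ξ))
  have e1 : (cplx L (z - ξ)).re = ‖L‖ * s := by linarith
  have e2 : ‖cplx L (z - ξ)‖ = ‖L‖ * s := by linarith
  have e3 : (cplx L (z - ξ)).im = 0 := by
    have := Complex.sq_norm (cplx L (z - ξ))
    rw [Complex.normSq_apply, e2, e1] at this
    nlinarith
  apply Complex.ext
  · rw [e1, Complex.ofReal_re]
  · rw [e3, Complex.ofReal_im]

lemma disc_est {s μ M' C e R : ℝ} (hs : 0 < s) (hs1 : s ≤ 1) (he : 0 < e) (he1 : e ≤ 1)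
    (hM : 0 < M') (hC : 4 * M' < C) (hCR : 2 / C < R) (hμ : μ = C * s ^ e) (hμ2 : μ ≤ 1 / 2)
    {ζ : ℂ} (hζ : ‖ζ‖ < 1) :
    1 - ((1 - μ : ℝ) : ℂ) * ζ ≠ 0 ∧
    ‖(s : ℂ) * ((1 + ((1 - μ : ℝ) : ℂ) * ζ) / (1 - ((1 - μ : ℝ) : ℂ) * ζ))‖ < R ∧
    M' * ‖(s : ℂ) * ((1 + ((1 - μ : ℝ) : ℂ) * ζ) / (1 - ((1 - μ : ℝ) : ℂ) * ζ))‖ ^ e *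
      ‖(s : ℂ) * ((1 + ((1 - μ : ℝ) : ℂ) * ζ) / (1 - ((1 - μ : ℝ) : ℂ) * ζ))‖ <
      ((s : ℂ) * ((1 + ((1 - μ : ℝ) : ℂ) * ζ) / (1 - ((1 - μ : ℝ) : ℂ) * ζ))).re := by
  have hCpos : 0 < C := by linarith
  have hse : 0 < s ^ e := Real.rpow_pos_of_pos hs e
  have hμ0 : 0 < μ := by rw [hμ]; positivity
  set ω : ℂ := ((1 - μ : ℝ) : ℂ) * ζ with hω
  have hωn : ‖ω‖ ≤ 1 - μ := by
    rw [hω, norm_mul, Complex.norm_real, Real.norm_of_nonneg (by linarith)]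
    nlinarith [norm_nonneg ζ]
  have hq1 : μ ≤ ‖1 - ω‖ := by
    have := norm_sub_norm_le (1:ℂ) ω
    rw [norm_one] at this; linarith
  have hq2 : ‖1 - ω‖ ≤ 2 := by
    have := norm_sub_le (1:ℂ) ω
    rw [norm_one] at this; linarith
  have hp2 : ‖1 + ω‖ ≤ 2 := by
    have := norm_add_le (1:ℂ) ω
    rw [norm_one] at this; linarith
  have hq0 : 0 < ‖1 - ω‖ := by linarith
  have hqne : 1 - ω ≠ 0 := norm_pos_iff.1 hq0
  set F : ℂ := (s : ℂ) * ((1 + ω) / (1 - ω)) with hF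
  set T : ℝ := 2 / ‖1 - ω‖ with hT
  have hT1 : 1 ≤ T := by rw [hT, le_div_iff₀ hq0]; linarith
  have hFn : ‖F‖ ≤ s * T := by
    rw [hF, norm_mul, norm_div, Complex.norm_real, Real.norm_of_nonneg hs.le]
    apply mul_le_mul_of_nonneg_left _ hs.le
    rw [hT]
    gcongr
  have hTμ : T ≤ 2 / μ := by rw [hT]; gcongr
  refine ⟨hqne, ?_, ?_⟩
  · calc ‖F‖ ≤ s * (2 / μ) := hFn.trans (by gcongr)
      _ = (s / s ^ e) * (2 / C) := by rw [hμ]; field_simp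
      _ ≤ 1 * (2 / C) := by
          gcongr
          rw [div_le_one hse]
          calc s = s ^ (1:ℝ) := (Real.rpow_one s).symm
            _ ≤ s ^ e := Real.rpow_le_rpow_of_exponent_ge hs hs1 he1
      _ < R := by linarith
  · have hre : F.re = s * (1 - ‖ω‖ ^ 2) / ‖1 - ω‖ ^ 2 := by
      rw [hF, Complex.re_ofReal_mul, Complex.div_re, Complex.sq_norm, Complex.sq_norm]
      have : Complex.normSq (1 - ω) ≠ 0 := by simpa using hqne
      field_simp
      simp [Complex.normSq_apply]
      ring
    have hlow : s * μ * T ^ 2 / 4 ≤ F.re := by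
      rw [hre, hT, div_pow]
      have : s * μ * (2 ^ 2 / ‖1 - ω‖ ^ 2) / 4 = s * μ / ‖1 - ω‖ ^ 2 := by ring
      rw [this]
      gcongr
      nlinarith [norm_nonneg ω]
    refine lt_of_lt_of_le ?_ hlow
    have h1 : ‖F‖ ^ e ≤ s ^ e * T := by
      calc ‖F‖ ^ e ≤ (s * T) ^ e := Real.rpow_le_rpow (norm_nonneg _) hFn he.le
        _ = s ^ e * T ^ e := Real.mul_rpow hs.le (by linarith)
        _ ≤ s ^ e * T ^ (1:ℝ) := by
            gcongr
        _ = s ^ e * T := by rw [Real.rpow_one]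
    calc M' * ‖F‖ ^ e * ‖F‖ ≤ M' * (s ^ e * T) * (s * T) := by gcongr
      _ = M' * (s ^ e * s * T ^ 2) := by ring
      _ < C / 4 * (s ^ e * s * T ^ 2) := by
          have : 0 < s ^ e * s * T ^ 2 := by positivity
          apply mul_lt_mul_of_pos_right _ this
          linarith
      _ = s * μ * T ^ 2 / 4 := by rw [hμ]; ring

lemma kobMetric_normal {D : Set E} {ξ n : E} {L : E →L[ℝ] ℝ} {s M' C e R : ℝ}
    (hn : ‖n‖ = 1) (hL : L ≠ 0) (hLn : cplx L n = (‖L‖ : ℂ))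
    (hs : 0 < s) (hs1 : s ≤ 1) (he : 0 < e) (he1 : e ≤ 1)
    (hM : 0 < M') (hC : 4 * M' < C) (hCR : 2 / C < R) (hμ2 : C * s ^ e ≤ 1 / 2)
    (hinter : ∀ p, ‖p - ξ‖ < R → L (p - ξ) + M' * ‖L‖ * ‖p - ξ‖ ^ e * ‖p - ξ‖ < 0 → p ∈ D) :
    ξ + s • n ∈ D ∧ kobMetric D (ξ + s • n) n ≤ 1 / 2 * s⁻¹ + C * s ^ (e - 1) := by
  have hse : 0 < s ^ e := Real.rpow_pos_of_pos hs e
  have hCpos : 0 < C := by linarith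
  have hL0 : 0 < ‖L‖ := norm_pos_iff.2 hL
  set μ := C * s ^ e with hμ
  have hμ0 : 0 < μ := by positivity
  let F : ℂ → ℂ := fun ζ => (s : ℂ) * ((1 + ((1 - μ : ℝ) : ℂ) * ζ) / (1 - ((1 - μ : ℝ) : ℂ) * ζ))
  let f : ℂ → E := fun ζ => ξ + F ζ • n
  have key := fun (ζ : ℂ) (hζ : ‖ζ‖ < 1) =>
    disc_est (R := R) hs hs1 he he1 hM hC hCR hμ hμ2 hζ
  have hmaps : MapsTo f (ball (0:ℂ) 1) D := by
    intro ζ hζ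
    obtain ⟨h1, h2, h3⟩ := key ζ (by simpa using hζ)
    change ‖F ζ‖ < R at h2
    change M' * ‖F ζ‖ ^ e * ‖F ζ‖ < (F ζ).re at h3
    have e1 : f ζ - ξ = F ζ • n := by simp [f]
    have e2 : ‖f ζ - ξ‖ = ‖F ζ‖ := by rw [e1, norm_smul, hn, mul_one]
    have e3 : L (f ζ - ξ) = - ((F ζ).re * ‖L‖) := by
      have := cplx_re L (f ζ - ξ)
      rw [e1, map_smul, hLn, smul_eq_mul, Complex.re_mul_ofReal] at this
      rw [e1]; linarith
    apply hinter _ (by rwa [e2])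
    rw [e2, e3]
    nlinarith
  have hFd : ∀ ζ : ℂ, ‖ζ‖ < 1 → HasDerivAt F ((s : ℂ) *
      ((((1 - μ : ℝ) : ℂ) * (1 - ((1 - μ : ℝ) : ℂ) * ζ) -
        (1 + ((1 - μ : ℝ) : ℂ) * ζ) * (-((1 - μ : ℝ) : ℂ))) / (1 - ((1 - μ : ℝ) : ℂ) * ζ) ^ 2)) ζ := by
    intro ζ hζ
    have d1 : HasDerivAt (fun ζ : ℂ => ((1 - μ : ℝ) : ℂ) * ζ) ((1 - μ : ℝ) : ℂ) ζ := by
      simpa using (hasDerivAt_id ζ).const_mul ((1 - μ : ℝ) : ℂ)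
    exact ((d1.const_add 1).div (d1.const_sub 1) (key ζ hζ).1).const_mul (s : ℂ)
  have hfd : ∀ ζ : ℂ, ‖ζ‖ < 1 → HasDerivAt f (((s : ℂ) *
      ((((1 - μ : ℝ) : ℂ) * (1 - ((1 - μ : ℝ) : ℂ) * ζ) -
        (1 + ((1 - μ : ℝ) : ℂ) * ζ) * (-((1 - μ : ℝ) : ℂ))) / (1 - ((1 - μ : ℝ) : ℂ) * ζ) ^ 2)) • n) ζ :=
    fun ζ hζ => ((hFd ζ hζ).smul_const n).const_add ξ
  have hf0 : f 0 = ξ + s • n := by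
    simp [f, F]
  refine ⟨by rw [← hf0]; exact hmaps (by simp), ?_⟩
  have hk := kobMetric_le (v := n) (ξ := ((1 / (2 * s * (1 - μ)) : ℝ) : ℂ))
    (fun ζ hζ => (hfd ζ (by simpa using hζ)).differentiableAt.differentiableWithinAt) hmaps hf0
    (hfd 0 (by simp)) (by
      rw [smul_smul]
      convert one_smul ℂ n using 2
      have h1 : (s : ℂ) ≠ 0 := by exact_mod_cast hs.ne'
      have h2 : ((1 - μ : ℝ) : ℂ) ≠ 0 := by
        have : (1 - μ : ℝ) ≠ 0 := by linarith
        exact_mod_cast this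
      rw [Complex.ofReal_div, Complex.ofReal_mul, Complex.ofReal_mul]
      generalize ((1 - μ : ℝ) : ℂ) = lam at *
      simp
      field_simp
      ring)
  refine hk.trans ?_
  have h3 : 0 < 1 - μ := by linarith
  rw [Complex.norm_real, Real.norm_of_nonneg (by positivity)]
  have e4 : C * s ^ (e - 1) = μ / s := by rw [Real.rpow_sub_one hs.ne', hμ]; ring
  rw [e4]
  rw [show 1 / 2 * s⁻¹ + μ / s = (1 + 2 * μ) / (2 * s) by field_simp]
  rw [div_le_div_iff₀ (by positivity) (by positivity)]
  have : 1 ≤ (1 + 2 * μ) * (1 - μ) := by nlinarith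
  nlinarith

lemma upper_curve [ProperSpace E] {D : Set E} (hD : IsOpen D) (hc : Convex ℝ D) {o ξ n : E}
    {s s₀ c K C e : ℝ} (hs : 0 < s) (hss : s ≤ s₀) (hs1 : s₀ ≤ 1) (he : 0 < e) (hC : 0 < C)
    (hc0 : 0 < c) (hob : ball o c ⊆ D) (hpb : ball (ξ + s₀ • n) c ⊆ D)
    (hK : ‖o - (ξ + s₀ • n)‖ ≤ K)
    (hk : ∀ t ∈ Icc s s₀, ξ + t • n ∈ D ∧
      kobMetric D (ξ + t • n) n ≤ 1 / 2 * t⁻¹ + C * t ^ (e - 1)) :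
    kobDist D (ξ + s • n) o ≤ 1 / 2 * (Real.log s₀ - Real.log s) + C / e + K / c := by
  classical
  set P := ξ + s₀ • n with hP
  have hs0 : 0 < s₀ := by linarith
  let g : ℝ → E := fun t => if t ≤ s₀ then n else o - P
  let σ : ℝ → E := fun t => (ξ + s • n) + ∫ u in s..t, g u
  have hI1 : ∀ t, s ≤ t → t ≤ s₀ → IntervalIntegrable g volume s t ∧ ∫ u in s..t, g u = (t - s) • n := by
    intro t h1 h2
    have heq : EqOn (fun _ => n) g (uIcc s t) := by
      intro u hu
      rw [uIcc_of_le h1] at hu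
      simp only [g]; rw [if_pos (hu.2.trans h2)]
    refine ⟨?_, ?_⟩
    · exact (intervalIntegrable_const (c := n)).congr_uIoo (heq.mono uIoo_subset_uIcc_self)
    · rw [← intervalIntegral.integral_congr heq]; simp
  have hI2 : ∀ t, s₀ ≤ t → IntervalIntegrable g volume s₀ t ∧
      ∫ u in s₀..t, g u = (t - s₀) • (o - P) := by
    intro t h1
    have heq : EqOn (fun _ => o - P) g (uIoo s₀ t) := by
      intro u hu
      rw [uIoo_of_le h1] at hu
      simp only [g]; rw [if_neg (not_le.2 hu.1)]
    refine ⟨?_, ?_⟩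
    · exact (intervalIntegrable_const (c := o - P)).congr_uIoo heq
    · rw [← intervalIntegral.integral_congr_uIoo heq, intervalIntegral.integral_const]
  have hσ1 : ∀ t ∈ Icc s s₀, σ t = ξ + t • n := by
    intro t ht
    simp only [σ]; rw [(hI1 t ht.1 ht.2).2, sub_smul]; abel
  have hσ2 : ∀ t, s₀ ≤ t → σ t = P + (t - s₀) • (o - P) := by
    intro t ht
    simp only [σ]
    rw [← intervalIntegral.integral_add_adjacent_intervals (hI1 s₀ hss le_rfl).1 (hI2 t ht).1,
      (hI1 s₀ hss le_rfl).2, (hI2 t ht).2, hP, sub_smul s₀ s n]; abel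
  have hσs : σ s = ξ + s • n := hσ1 s ⟨le_rfl, hss⟩
  have hσe : σ (s₀ + 1) = o := by rw [hσ2 _ (by linarith)]; simp
  have hac : IsACWithDeriv σ g s (s₀ + 1) := by
    refine ⟨(hI1 s₀ hss le_rfl).1.trans (hI2 (s₀ + 1) (by linarith)).1, fun t ht => ?_⟩
    rw [hσs]
  have hball : ∀ t ∈ Icc s₀ (s₀ + 1), ball (σ t) c ⊆ D := by
    intro t ht u hu
    rw [hσ2 t ht.1] at hu
    set v := u - (P + (t - s₀) • (o - P)) with hv
    have hvn : ‖v‖ < c := by rwa [mem_ball_iff_norm] at hu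
    have h1 : P + v ∈ D := hpb (by rw [mem_ball_iff_norm, add_sub_cancel_left]; exact hvn)
    have h2 : o + v ∈ D := hob (by rw [mem_ball_iff_norm, add_sub_cancel_left]; exact hvn)
    have h3 := hc.add_smul_sub_mem h1 h2 (t := t - s₀) ⟨by linarith [ht.1], by linarith [ht.2]⟩
    have e : u = P + v + (t - s₀) • (o + v - (P + v)) := by
      rw [add_sub_add_right_eq_sub, hv]; abel
    rw [e]; exact h3
  have hm : MapsTo σ (Icc s (s₀ + 1)) D := by
    intro t ht
    rcases le_total t s₀ with h | h
    · rw [hσ1 t ⟨ht.1, h⟩]; exact (hk t ⟨ht.1, h⟩).1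
    · exact hball t ⟨h, ht.2⟩ (mem_ball_self hc0)
  have hle := kobDist_le (by linarith : s ≤ s₀ + 1) hac hm
  rw [hσs, hσe] at hle
  refine hle.trans ?_
  have ac1 := hac.sub le_rfl hss (by linarith : s₀ ≤ s₀ + 1)
  have ac2 := hac.sub hss (by linarith : s₀ ≤ s₀ + 1) le_rfl
  have i1 := kob_integrable hD hc hss ac1 (hm.mono_left (Icc_subset_Icc le_rfl (by linarith)))
  have i2 := kob_integrable hD hc (by linarith) ac2 (hm.mono_left (Icc_subset_Icc hss le_rfl))
  rw [← intervalIntegral.integral_add_adjacent_intervals i1 i2]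
  have b2 : ∫ t in s₀..(s₀ + 1), kobMetric D (σ t) (g t) ≤ K / c := by
    have := intervalIntegral.norm_integral_le_of_norm_le_const (a := s₀) (b := s₀ + 1)
      (f := fun t => kobMetric D (σ t) (g t)) (C := K / c) (by
        intro t ht
        rw [uIoc_of_le (by linarith)] at ht
        rw [Real.norm_of_nonneg (kobMetric_nonneg _ _ _)]
        have h1 := kobMetric_le_ball (g t) hc0 (hball t ⟨ht.1.le, ht.2⟩)
        refine h1.trans ?_
        simp only [g]; rw [if_neg (not_le.2 ht.1)]
        gcongr)
    rw [add_sub_cancel_left, abs_one, mul_one] at this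
    exact (le_abs_self _).trans this
  have hu0 : ∀ t ∈ uIcc s s₀, t ≠ 0 := by
    intro t ht; rw [uIcc_of_le hss] at ht; linarith [ht.1]
  have hnot : (0:ℝ) ∉ uIcc s s₀ := fun h => hu0 0 h rfl
  have j1 : IntervalIntegrable (fun t : ℝ => 1 / 2 * t⁻¹) volume s s₀ :=
    (intervalIntegral.intervalIntegrable_inv hu0 continuousOn_id).const_mul _
  have j2 : IntervalIntegrable (fun t : ℝ => C * t ^ (e - 1)) volume s s₀ :=
    (intervalIntegral.intervalIntegrable_rpow (Or.inr hnot)).const_mul _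
  have b1 : ∫ t in s..s₀, kobMetric D (σ t) (g t) ≤
      1 / 2 * (Real.log s₀ - Real.log s) + C / e := by
    calc ∫ t in s..s₀, kobMetric D (σ t) (g t)
        ≤ ∫ t in s..s₀, (1 / 2 * t⁻¹ + C * t ^ (e - 1)) := by
          apply intervalIntegral.integral_mono_on hss i1 (j1.add j2)
          intro t ht
          rw [hσ1 t ht]
          simp only [g]; rw [if_pos ht.2]
          exact (hk t ht).2
      _ = 1 / 2 * Real.log (s₀ / s) + C * ((s₀ ^ (e - 1 + 1) - s ^ (e - 1 + 1)) / (e - 1 + 1)) := by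
          rw [intervalIntegral.integral_add j1 j2, intervalIntegral.integral_const_mul,
            intervalIntegral.integral_const_mul, integral_inv hnot,
            integral_rpow (Or.inl (by linarith))]
      _ ≤ _ := by
          rw [Real.log_div hs0.ne' hs.ne', sub_add_cancel]
          have h1 : s₀ ^ e ≤ 1 := Real.rpow_le_one hs0.le hs1 he.le
          have h2 : 0 ≤ s ^ e := Real.rpow_nonneg hs.le e
          have : C * ((s₀ ^ e - s ^ e) / e) ≤ C * (1 / e) := by gcongr; linarith
          rw [mul_one_div] at this
          linarith
  linarith

lemma upper_near [ProperSpace E] {D : Set E} (hD : IsOpen D) (hb : Bornology.IsBounded D)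
    (hc : Convex ℝ D) {o x : E} (ho : o ∈ D) (hx : x ∈ frontier D)
    {W : Set E} {ρ : E → ℝ} {M ε : ℝ} (hM : 0 < M) (hε : 0 < ε)
    (h : IsLocalDefiningFn D x W ρ)
    (hH : ∀ x ∈ W, ∀ y ∈ W, ‖fderiv ℝ ρ x - fderiv ℝ ρ y‖ ≤ M * ‖x - y‖ ^ ε) :
    ∃ B C₀ : ℝ, ∀ᶠ z in 𝓝 x, z ∈ D → ∃ ξ ∈ frontier D, ξ ∈ W ∧ ‖ξ - x‖ ≤ 2 * ‖z - x‖ ∧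
      ‖cplx (fderiv ℝ ρ ξ) (z - ξ)‖ ≤ C₀ * ‖z - x‖ ∧
      kobDist D z o ≤ B - 1 / 2 * Real.log ‖cplx (fderiv ℝ ρ ξ) (z - ξ)‖ := by
  obtain ⟨R, M', C₀, hR, hM', hC₀, hloc⟩ := local_data hM hε h hH
  set e := min ε 1 with he_def
  have he : 0 < e := lt_min hε one_pos
  have he1 : e ≤ 1 := min_le_right _ _
  set C := 4 * M' + 2 / R + 1 with hC_def
  have h2R : 0 < 2 / R := by positivity
  have hC : 0 < C := by positivity
  have hC4 : 4 * M' < C := by linarith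
  have hCR : 2 / C < R := by
    rw [div_lt_iff₀ hC]
    have : 2 / R < C := by linarith
    rw [div_lt_iff₀ hR] at this
    linarith
  set s₀ : ℝ := (1 / (2 * C)) ^ e⁻¹ with hs₀_def
  have hs₀ : 0 < s₀ := by positivity
  have hs₀e : s₀ ^ e = 1 / (2 * C) := Real.rpow_inv_rpow (by positivity) he.ne'
  have hs₀1 : s₀ ≤ 1 := by
    apply Real.rpow_le_one (by positivity) _ (by positivity)
    rw [div_le_one (by positivity)]; linarith
  have hs₀s : s₀ ≤ s₀ ^ e := by
    calc s₀ = s₀ ^ (1:ℝ) := (Real.rpow_one s₀).symm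
      _ ≤ s₀ ^ e := Real.rpow_le_rpow_of_exponent_ge hs₀ hs₀1 he1
  have hCs₀ : C * s₀ ^ e = 1 / 2 := by rw [hs₀e]; field_simp
  obtain ⟨δ, hδ, hδb⟩ := Metric.isOpen_iff.1 hD o ho
  set c := min (s₀ / 2) δ with hc_def
  have hc0 : 0 < c := lt_min (by positivity) hδ
  obtain ⟨K, hK⟩ := (Metric.isBounded_iff.1 hb)
  refine ⟨1 / 2 * (Real.log s₀ + Real.log C₀) + C / e + K / c, C₀, ?_⟩
  filter_upwards [Metric.ball_mem_nhds x (by positivity : 0 < min (R / 2) s₀)] with z hz hzD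
  rw [mem_ball_iff_norm] at hz
  have hz1 : ‖z - x‖ < R / 2 := lt_of_lt_of_le hz (min_le_left _ _)
  have hz2 : ‖z - x‖ < s₀ := lt_of_lt_of_le hz (min_le_right _ _)
  obtain ⟨ξ, hξ, hpos, hball, hle⟩ := nearest hD hx hzD
  have hξx : ‖ξ - x‖ ≤ 2 * ‖z - x‖ := by
    calc ‖ξ - x‖ = ‖(z - x) - (z - ξ)‖ := by congr 1; abel
      _ ≤ ‖z - x‖ + ‖z - ξ‖ := norm_sub_le _ _
      _ ≤ _ := by linarith
  obtain ⟨hξW, hLC, hinter⟩ := hloc ξ hξ (by linarith)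
  set L := fderiv ℝ ρ ξ with hL_def
  have hL : L ≠ 0 := h.2.2.2.1 ξ hξW
  have hL0 : 0 < ‖L‖ := norm_pos_iff.2 hL
  have hsup : ∀ u ∈ D, L (u - ξ) < 0 := ldf_support hD hc (h.at hξW) hξ
  have hnorm := normal_eq hsup hpos hball
  have hcn : ‖cplx L (z - ξ)‖ = ‖L‖ * ‖z - ξ‖ := by
    rw [hnorm, Complex.norm_real, Real.norm_of_nonneg (by positivity)]
  refine ⟨ξ, hξ, hξW, hξx, ?_, ?_⟩
  · rw [hcn]; gcongr
  set s := ‖z - ξ‖ with hs_def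
  set n : E := s⁻¹ • (z - ξ) with hn_def
  have hn : ‖n‖ = 1 := by
    rw [hn_def, norm_smul, norm_inv, Real.norm_of_nonneg hpos.le, ← hs_def, inv_mul_cancel₀ hpos.ne']
  have hzn : ξ + s • n = z := by
    rw [hn_def, smul_smul, mul_inv_cancel₀ hpos.ne', one_smul]; abel
  have hLn : cplx L n = (‖L‖ : ℂ) := by
    have : n = ((s⁻¹ : ℝ) : ℂ) • (z - ξ) := by rw [hn_def]; exact (Complex.coe_smul _ _).symm
    rw [this, map_smul, hnorm, smul_eq_mul, ← Complex.ofReal_mul]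
    congr 1
    field_simp
  have hk : ∀ t ∈ Icc s s₀, ξ + t • n ∈ D ∧
      kobMetric D (ξ + t • n) n ≤ 1 / 2 * t⁻¹ + C * t ^ (e - 1) := by
    intro t ht
    have ht0 : 0 < t := lt_of_lt_of_le hpos ht.1
    refine kobMetric_normal (R := R) hn hL hLn ht0 (ht.2.trans hs₀1) he he1 hM' hC4 hCR ?_ hinter
    rw [← hCs₀]
    gcongr
    exact ht.2
  have hpb : ball (ξ + s₀ • n) c ⊆ D := by
    intro p hp
    rw [mem_ball_iff_norm] at hp
    set v := p - (ξ + s₀ • n) with hv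
    have hvn : ‖v‖ < s₀ / 2 := lt_of_lt_of_le hp (min_le_left _ _)
    have e1 : p - ξ = s₀ • n + v := by rw [hv]; abel
    have e2 : ‖p - ξ‖ ≤ 2 * s₀ := by
      rw [e1]
      refine (norm_add_le _ _).trans ?_
      rw [norm_smul, hn, Real.norm_of_nonneg hs₀.le]; linarith
    apply hinter p
    · refine lt_of_le_of_lt e2 ?_
      have : 2 * s₀ ≤ 1 / C := by
        calc 2 * s₀ ≤ 2 * (1 / (2 * C)) := by rw [← hs₀e]; linarith
          _ = 1 / C := by field_simp
      have : 1 / C < 2 / C := by gcongr; norm_num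
      linarith
    · have hLnr : L n = -‖L‖ := by
        have := cplx_re L n
        rw [hLn, Complex.ofReal_re] at this
        linarith
      have hLv : L v ≤ ‖L‖ * (s₀ / 2) := by
        refine (le_abs_self _).trans ((L.le_opNorm v).trans ?_)
        gcongr
      have hp1 : ‖p - ξ‖ ^ e ≤ 2 * s₀ ^ e := by
        calc ‖p - ξ‖ ^ e ≤ (2 * s₀) ^ e := Real.rpow_le_rpow (norm_nonneg _) e2 he.le
          _ = 2 ^ e * s₀ ^ e := Real.mul_rpow (by norm_num) hs₀.le
          _ ≤ 2 ^ (1:ℝ) * s₀ ^ e := by gcongr; norm_num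
          _ = 2 * s₀ ^ e := by rw [Real.rpow_one]
      have hp2 : M' * ‖L‖ * ‖p - ξ‖ ^ e * ‖p - ξ‖ ≤ M' * ‖L‖ * (2 * s₀ ^ e) * (2 * s₀) := by
        gcongr
      have hp3 : M' * ‖L‖ * (2 * s₀ ^ e) * (2 * s₀) = (4 * M') * (s₀ ^ e * ‖L‖ * s₀) := by ring
      have hp4 : (4 * M') * (s₀ ^ e * ‖L‖ * s₀) < C * (s₀ ^ e * ‖L‖ * s₀) :=
        mul_lt_mul_of_pos_right hC4 (by positivity)
      have hp5 : C * (s₀ ^ e * ‖L‖ * s₀) = 1 / 2 * ‖L‖ * s₀ := by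
        rw [← hCs₀]; ring
      have hLp : L (p - ξ) = - s₀ * ‖L‖ + L v := by
        rw [e1, map_add, map_smul, hLnr, smul_eq_mul]; ring
      rw [hLp]
      linarith
  have hPD : ξ + s₀ • n ∈ D := hpb (mem_ball_self hc0)
  have hup := upper_curve (K := K) hD hc hpos (by linarith : s ≤ s₀) hs₀1 he hC hc0
    ((ball_subset_ball (min_le_right _ _)).trans hδb) hpb
    (by rw [← dist_eq_norm]; exact hK ho hPD) hk
  rw [hzn] at hup
  rw [hcn, Real.log_mul hL0.ne' hpos.ne']
  have := Real.log_le_log hL0 hLC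
  linarith

lemma main_bound [ProperSpace E] {D : Set E} (hD : IsOpen D) (hb : Bornology.IsBounded D)
    (hc : Convex ℝ D) {ε : ℝ} (hε : 0 < ε) (hbd : HolderC1Boundary D ε) {o : E} (ho : o ∈ D)
    {x y : E} (hx : x ∈ frontier D) (hy : y ∈ frontier D)
    {Wx Wy : Set E} {ρx ρy : E → ℝ} (hρx : IsLocalDefiningFn D x Wx ρx)
    (hρy : IsLocalDefiningFn D y Wy ρy)
    (hne : complexTangentHyperplane ρx x ≠ complexTangentHyperplane ρy y) :
    ∃ B : ℝ, ∃ δ > 0, ∀ z ∈ D, ∀ w ∈ D, ‖z - x‖ < δ → ‖w - y‖ < δ → gromovProd D o z w ≤ B := by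
  obtain ⟨W, ρ, M, hM, h, hH⟩ := hbd x hx
  obtain ⟨W', ρ', M', hM', h', hH'⟩ := hbd y hy
  have self_mem : ∀ (ρ : E → ℝ) (u : E), u ∈ complexTangentHyperplane ρ u := by
    intro ρ u; rw [mem_tangent_iff]; simp
  rw [tangent_eq hD hc hρx hx h hx (self_mem _ _), tangent_eq hD hc hρy hy h' hy (self_mem _ _)] at hne
  have hloc : ∀ u ∈ frontier D, ∃ W ρ, IsLocalDefiningFn D u W ρ := by
    intro u hu
    obtain ⟨W, ρ, -, -, h, -⟩ := hbd u hu
    exact ⟨W, ρ, h⟩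
  obtain ⟨r, hr, hdis⟩ := disjointness hD hb hc hloc h hx h' hy hne
  obtain ⟨B₁, C₁, hu₁⟩ := upper_near hD hb hc ho hx hM hε h hH
  obtain ⟨B₂, C₂, hu₂⟩ := upper_near hD hb hc ho hy hM' hε h' hH'
  obtain ⟨δ₀, hδ₀, hdis⟩ := Metric.eventually_nhds_iff_ball.1 hdis
  obtain ⟨δ₁, hδ₁, hu₁⟩ := Metric.eventually_nhds_iff_ball.1 hu₁
  obtain ⟨δ₂, hδ₂, hu₂⟩ := Metric.eventually_nhds_iff_ball.1 hu₂
  obtain ⟨δ, hδ, hδlt⟩ : ∃ δ : ℝ, 0 < δ ∧ ∀ a : ℝ, a < δ →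
      (a < δ₀ / 2 ∧ a < δ₁ ∧ a < δ₂) ∧ a < r / (|C₁| + 1) ∧ a < r / (|C₂| + 1) := by
    have p1 : 0 < r / (|C₁| + 1) := div_pos hr (by positivity)
    have p2 : 0 < r / (|C₂| + 1) := div_pos hr (by positivity)
    refine ⟨min (min (δ₀ / 2) (min δ₁ δ₂)) (min (r / (|C₁| + 1)) (r / (|C₂| + 1))),
      lt_min (lt_min (half_pos hδ₀) (lt_min hδ₁ hδ₂)) (lt_min p1 p2), ?_⟩
    intro a ha
    simpa only [lt_min_iff] using ha
  refine ⟨(B₁ + B₂ - Real.log r) / 2, δ, hδ, ?_⟩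
  intro z hz w hw hzδ hwδ
  replace hzδ := hδlt _ hzδ
  replace hwδ := hδlt _ hwδ
  obtain ⟨⟨z0, z1, -⟩, z3, -⟩ := hzδ
  obtain ⟨⟨w0, -, w2⟩, -, w4⟩ := hwδ
  obtain ⟨ξ, hξ, hξW, hξx, hξn, hk₁⟩ := hu₁ z (by rwa [mem_ball_iff_norm]) hz
  obtain ⟨η, hη, hηW, hηy, hηn, hk₂⟩ := hu₂ w (by rwa [mem_ball_iff_norm]) hw
  have bound : ∀ (C a : ℝ), 0 ≤ a → a < r / (|C| + 1) → C * a ≤ r := by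
    intro C a ha hlt
    rw [lt_div_iff₀ (by positivity)] at hlt
    nlinarith [le_abs_self C]
  have hq : ((ξ, η) : E × E) ∈ ball ((x, y) : E × E) δ₀ := by
    rw [← ball_prod_same]
    apply Set.mk_mem_prod
    · rw [mem_ball_iff_norm]; linarith
    · rw [mem_ball_iff_norm]; linarith
  have hsup₁ : ∀ u ∈ D, 0 < (cplx (fderiv ℝ ρ ξ) (u - ξ)).re := by
    intro u hu
    rw [cplx_re]; linarith [ldf_support hD hc (h.at hξW) hξ u hu]
  have hsup₂ : ∀ u ∈ D, 0 < (cplx (fderiv ℝ ρ' η) (u - η)).re := by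
    intro u hu
    rw [cplx_re]; linarith [ldf_support hD hc (h'.at hηW) hη u hu]
  have hd : ∀ u ∈ D, ‖cplx (fderiv ℝ ρ ξ) (u - ξ)‖ ≤ r →
      ‖cplx (fderiv ℝ ρ' η) (u - η)‖ ≤ r → False := hdis (ξ, η) hq
  have hz' : ‖cplx (fderiv ℝ ρ ξ) (z - ξ)‖ ≤ r := hξn.trans (bound _ _ (norm_nonneg _) z3)
  have hw' : ‖cplx (fderiv ℝ ρ' η) (w - η)‖ ≤ r := hηn.trans (bound _ _ (norm_nonneg _) w4)
  have hlow := kobDist_lower hD hc hr hsup₁ hsup₂ hd hz hw hz' hw'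
  have hcomm := kobDist_comm_le hc ho hw
  unfold gromovProd
  linarith

end

theorem statement_19 {n : ℕ}
    (Ω : Set (EuclideanSpace ℂ (Fin n)))
    (hΩo : IsOpen Ω) (hne : Ω.Nonempty) (hΩb : Bornology.IsBounded Ω)
    (hconv : Convex ℝ Ω)
    (ε : ℝ) (hε : 0 < ε) (hbd : HolderC1Boundary Ω ε)
    (o : EuclideanSpace ℂ (Fin n)) (ho : o ∈ Ω)
    (z w : ℕ → EuclideanSpace ℂ (Fin n)) (hz : ∀ k, z k ∈ Ω) (hw : ∀ m, w m ∈ Ω)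
    (x y : EuclideanSpace ℂ (Fin n)) (hx : x ∈ frontier Ω) (hy : y ∈ frontier Ω)
    (hzlim : Tendsto z atTop (𝓝 x)) (hwlim : Tendsto w atTop (𝓝 y))
    (hlimsup : ∀ M : ℝ, ∀ N : ℕ, ∃ k ≥ N, ∃ m ≥ N, M < gromovProd Ω o (z k) (w m)) :
    ∀ (Wx : Set (EuclideanSpace ℂ (Fin n))) (ρx : EuclideanSpace ℂ (Fin n) → ℝ), IsLocalDefiningFn Ω x Wx ρx →
    ∀ (Wy : Set (EuclideanSpace ℂ (Fin n))) (ρy : EuclideanSpace ℂ (Fin n) → ℝ), IsLocalDefiningFn Ω y Wy ρy →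
      complexTangentHyperplane ρx x = complexTangentHyperplane ρy y := by
  intro Wx ρx hρx Wy ρy hρy
  by_contra hcon
  obtain ⟨B, δ, hδ, hB⟩ := main_bound hΩo hΩb hconv hε hbd ho hx hy hρx hρy hcon
  obtain ⟨N₁, hN₁⟩ := Metric.tendsto_atTop.1 hzlim δ hδ
  obtain ⟨N₂, hN₂⟩ := Metric.tendsto_atTop.1 hwlim δ hδ
  obtain ⟨k, hk, m, hm, hlt⟩ := hlimsup B (max N₁ N₂)
  have h1 := hN₁ k (le_trans (le_max_left _ _) hk)
  have h2 := hN₂ m (le_trans (le_max_right _ _) hm)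
  rw [dist_eq_norm] at h1 h2
  exact absurd (hB (z k) (hz k) (w m) (hw m) h1 h2) (not_le.2 hlt)
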